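/- Let d ∈ {xd, cd} and let L1, L2 be consistent propositional modal logics in disjoint modal signatures M1, M2 such that [L_i, S5]^d is Kripke complete (respectively, globally Kripke complete) for i = 1,2, with a shared S5 operator □_E. Then [L1, S5]^d ⊗_E [L2, S5]^d is Kripke complete (respectively, globally Kripke complete); moreover, [L1, S5]^d ⊗_E [L2, S5]^d is decidable (respectively, globally decidable) if and only if both [L1, S5]^d and [L2, S5]^d are decidable (respectively, globally decidable). -/

import Mathlib

namespace PropML

/-- propositional modal formulas over modal signature `M` -/
inductive PF (M : Type) : Type
  | atom : ℕ → PF M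
  | neg : PF M → PF M
  | and : PF M → PF M → PF M
  | box : M → PF M → PF M
  deriving DecidableEq

namespace PF

variable {M M' : Type}

def imp (φ ψ : PF M) : PF M := .neg (.and φ (.neg ψ))

def or (φ ψ : PF M) : PF M := .neg (.and (.neg φ) (.neg ψ))

def dia (m : M) (φ : PF M) : PF M := .neg (.box m (.neg φ))

/-- `⊥` -/
def bot : PF M := .and (.atom 0) (.neg (.atom 0))

/-- renaming of modal operators -/
def mapOp (f : M → M') : PF M → PF M'
  | atom n => atom n
  | neg φ => neg (mapOp f φ)
  | and φ ψ => and (mapOp f φ) (mapOp f ψ)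
  | box m φ => box (f m) (mapOp f φ)

/-- uniform substitution -/
def substP (σ : ℕ → PF M) : PF M → PF M
  | atom n => σ n
  | neg φ => neg (substP σ φ)
  | and φ ψ => and (substP σ φ) (substP σ ψ)
  | box m φ => box m (substP σ φ)

end PF

/-- evaluation treating atoms and boxed formulas as atomic; used to define
the classical tautologies of the modal language -/
def tautEval {M : Type} (v : PF M → Prop) : PF M → Prop
  | .atom n => v (.atom n)
  | .neg φ => ¬ tautEval v φ
  | .and φ ψ => tautEval v φ ∧ tautEval v ψ
  | .box m φ => v (.box m φ)

/-- classical tautologies of the propositional modal language -/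
def IsTaut {M : Type} (φ : PF M) : Prop := ∀ v, tautEval v φ

/-- a (normal) propositional modal `M`-logic -/
structure IsPLogic {M : Type} (L : Set (PF M)) : Prop where
  taut : ∀ φ, IsTaut φ → φ ∈ L
  kax : ∀ (m : M) (n k : ℕ),
    PF.imp (.box m (PF.imp (.atom n) (.atom k)))
      (PF.imp (.box m (.atom n)) (.box m (.atom k))) ∈ L
  mp : ∀ φ ψ, PF.imp φ ψ ∈ L → φ ∈ L → ψ ∈ L
  nec : ∀ m φ, φ ∈ L → PF.box m φ ∈ L
  subst : ∀ (σ : ℕ → PF M) φ, φ ∈ L → PF.substP σ φ ∈ L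

/-- A Kripke `M`-frame. -/
structure KFrame (M : Type) where
  W : Type
  ne : Nonempty W
  R : M → W → W → Prop

/-- truth of a propositional formula in a Kripke model `(F, V)` -/
def PVal {M : Type} {F : KFrame M} (V : ℕ → F.W → Prop) : PF M → F.W → Prop
  | .atom n, w => V n w
  | .neg φ, w => ¬ PVal V φ w
  | .and φ ψ, w => PVal V φ w ∧ PVal V ψ w
  | .box m φ, w => ∀ v, F.R m w v → PVal V φ v

/-- validity of a propositional formula on a frame -/
def PValid {M : Type} (F : KFrame M) (φ : PF M) : Prop :=
  ∀ (V : ℕ → F.W → Prop) (w : F.W), PVal (F := F) V φ w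

/-- `F` is a frame for the logic `L` -/
def FrameFor {M : Type} (F : KFrame M) (L : Set (PF M)) : Prop :=
  ∀ φ ∈ L, PValid F φ

/-- `L` is Kripke complete -/
def KComplete {M : Type} (L : Set (PF M)) : Prop :=
  ∀ φ, (∀ F : KFrame M, FrameFor F L → PValid F φ) → φ ∈ L

/-- global consequence `φ ⊢*_L ψ`: `ψ` is in the smallest set including
`L ∪ {φ}` closed under Modus Ponens and Necessitation -/
inductive PGlobal {M : Type} (L : Set (PF M)) (φ : PF M) : PF M → Prop
  | ax {ψ} : ψ ∈ L → PGlobal L φ ψ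
  | prem : PGlobal L φ φ
  | mp {ψ χ} : PGlobal L φ (PF.imp ψ χ) → PGlobal L φ ψ → PGlobal L φ χ
  | nec (m : M) {ψ} : PGlobal L φ ψ → PGlobal L φ (PF.box m ψ)

/-- `L` is globally Kripke complete -/
def GloballyKComplete {M : Type} (L : Set (PF M)) : Prop :=
  ∀ φ ψ, PGlobal L φ ψ ↔
    ∀ F : KFrame M, FrameFor F L → ∀ V : ℕ → F.W → Prop,
      (∀ w, PVal (F := F) V φ w) → ∀ w, PVal (F := F) V ψ w

/-- the S5 axioms for the operator `e` -/
def ContainsS5 {M : Type} (L : Set (PF M)) (e : M) : Prop :=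
  PF.imp (.box e (.atom 0)) (.atom 0) ∈ L ∧
  PF.imp (.box e (.atom 0)) (.box e (.box e (.atom 0))) ∈ L ∧
  PF.imp (PF.dia e (.atom 0)) (.box e (PF.dia e (.atom 0))) ∈ L

/-- an `(E, κ)`-homogeneous model: in each `E`-equivalence class, each formula
is satisfied either nowhere or at exactly `κ` worlds -/
def EHomog {M : Type} {F : KFrame M} (e : M) (V : ℕ → F.W → Prop)
    (κ : Cardinal) : Prop :=
  ∀ (w : F.W) (φ : PF M),
    Cardinal.mk {v : F.W // F.R e w v ∧ PVal (F := F) V φ v} = 0 ∨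
    Cardinal.mk {v : F.W // F.R e w v ∧ PVal (F := F) V φ v} = κ

/-- `L` admits `E`-homogeneous models -/
def AdmitsEHomog {M : Type} (e : M) (L : Set (PF M)) : Prop :=
  ∃ κ : Cardinal, Cardinal.aleph0 ≤ κ ∧ ∀ κ', κ ≤ κ' → ∀ φ ∉ L,
    ∃ F : KFrame M, FrameFor F L ∧ ∃ V : ℕ → F.W → Prop,
      EHomog e V κ' ∧ ∃ w, ¬ PVal (F := F) V φ w

/-- `L` admits `E`-homogeneous models for global consequence -/
def AdmitsEHomogGlobal {M : Type} (e : M) (L : Set (PF M)) : Prop :=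
  ∃ κ : Cardinal, Cardinal.aleph0 ≤ κ ∧ ∀ κ', κ ≤ κ' → ∀ φ ψ, ¬ PGlobal L φ ψ →
    ∃ F : KFrame M, FrameFor F L ∧ ∃ V : ℕ → F.W → Prop,
      EHomog e V κ' ∧ (∀ w, PVal (F := F) V φ w) ∧ ∃ w, ¬ PVal (F := F) V ψ w

/-- the fusion `L1 ⊗_E L2` of two logics sharing the S5 operator `□_E`
(designated by `none` in each component signature): the smallest propositional
modal logic in the combined language (with the single shared `□_E`) including
`L1 ∪ L2` -/
def fusionE {M1 M2 : Type} (L1 : Set (PF (Option M1))) (L2 : Set (PF (Option M2))) :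
    Set (PF (Option (M1 ⊕ M2))) :=
  ⋂₀ {L | IsPLogic L ∧
    PF.mapOp (Option.map Sum.inl) '' L1 ⊆ L ∧
    PF.mapOp (Option.map Sum.inr) '' L2 ⊆ L}

/-- the propositional modal logic `S5` (of the single operator `□_E`) -/
def S5L : Set (PF Unit) := ⋂₀ {L | IsPLogic L ∧ ContainsS5 L ()}

/-- the left commutativity axiom `□□_E p → □_E □ p` -/
def lcom {M : Type} (m : M) : PF (Option M) :=
  PF.imp (.box (some m) (.box none (.atom 0))) (.box none (.box (some m) (.atom 0)))

/-- the right commutativity axiom `□_E □ p → □ □_E p` -/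
def rcom {M : Type} (m : M) : PF (Option M) :=
  PF.imp (.box none (.box (some m) (.atom 0))) (.box (some m) (.box none (.atom 0)))

/-- the semicommutator `[L, S5]^xd = L ⊗ S5 + {lcom_□ : □ ∈ M}`
(`□_E` is `none`) -/
def LS5xd {M : Type} (L : Set (PF M)) : Set (PF (Option M)) :=
  ⋂₀ {L' | IsPLogic L' ∧
    PF.mapOp Option.some '' L ⊆ L' ∧
    PF.mapOp (fun _ => (none : Option M)) '' S5L ⊆ L' ∧
    ∀ m : M, lcom m ∈ L'}

/-- the commutator `[L, S5]^cd = [L, S5]^xd + {rcom_□ : □ ∈ M}` -/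
def LS5cd {M : Type} (L : Set (PF M)) : Set (PF (Option M)) :=
  ⋂₀ {L' | IsPLogic L' ∧ LS5xd L ⊆ L' ∧ ∀ m : M, rcom m ∈ L'}

/-- the two domain semantics: expanding (`xd`) and constant (`cd`) domains -/
inductive DSem : Type
  | xd | cd
  deriving DecidableEq

/-- `[L, S5]^d` -/
def LS5 {M : Type} (d : DSem) (L : Set (PF M)) : Set (PF (Option M)) :=
  match d with
  | .xd => LS5xd L
  | .cd => LS5cd L

/-- the fixed Gödel numbering of propositional formulas (relative to a
numbering `eM` of the modal operators) -/
def PF.encode {M : Type} (eM : M → ℕ) : PF M → ℕ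
  | .atom n => Nat.pair 0 n
  | .neg φ => Nat.pair 1 (PF.encode eM φ)
  | .and φ ψ => Nat.pair 2 (Nat.pair (PF.encode eM φ) (PF.encode eM ψ))
  | .box m φ => Nat.pair 3 (Nat.pair (eM m) (PF.encode eM φ))

/-- decidability of a propositional logic w.r.t. the fixed Gödel numbering -/
def DecidableP {M : Type} (eM : M → ℕ) (L : Set (PF M)) : Prop :=
  ComputablePred (fun n : ℕ => ∃ φ ∈ L, PF.encode eM φ = n)

/-- decidability of the global consequence relation -/
def GloballyDecidableP {M : Type} (eM : M → ℕ) (L : Set (PF M)) : Prop :=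
  ComputablePred (fun p : ℕ × ℕ =>
    ∃ φ ψ, PGlobal L φ ψ ∧ PF.encode eM φ = p.1 ∧ PF.encode eM ψ = p.2)

end PropML

namespace PropML

/-- numbering of the signature `Option M` from a numbering of `M` -/
def eOpt {M : Type} (e : M → ℕ) : Option M → ℕ :=
  fun o => match o with | none => 0 | some m => e m + 1

/-- numbering of the combined signature `Option (M1 ⊕ M2)` -/
def eOptSum {M1 M2 : Type} (e1 : M1 → ℕ) (e2 : M2 → ℕ) : Option (M1 ⊕ M2) → ℕ :=
  fun o => match o with
  | none => 0
  | some (Sum.inl m) => 2 * e1 m + 1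
  | some (Sum.inr m) => 2 * e2 m + 2

set_option linter.unusedVariables false

/-! ### Part A: semantics -/

/-- reduct of a frame along a renaming of operators -/
def KFrame.red {M M' : Type} (F : KFrame M') (f : M → M') : KFrame M :=
  ⟨F.W, F.ne, fun m => F.R (f m)⟩

theorem PVal_mapOp {M M' : Type} (F : KFrame M') (f : M → M') (V : ℕ → F.W → Prop)
    (φ : PF M) : ∀ w : F.W,
    PVal (F := F) V (PF.mapOp f φ) w ↔ PVal (F := F.red f) V φ w := by
  induction φ with
  | atom n => intro w; exact Iff.rfl
  | neg φ ih => intro w; exact not_congr (ih w)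
  | and φ ψ ih1 ih2 => intro w; exact and_congr (ih1 w) (ih2 w)
  | box m φ ih => intro w; exact forall_congr' fun v => imp_congr Iff.rfl (ih v)

theorem PVal_subst {M : Type} (F : KFrame M) (σ : ℕ → PF M) (V : ℕ → F.W → Prop)
    (φ : PF M) : ∀ w : F.W,
    PVal (F := F) V (PF.substP σ φ) w ↔ PVal (F := F) (fun n w => PVal (F := F) V (σ n) w) φ w := by
  induction φ with
  | atom n => intro w; exact Iff.rfl
  | neg φ ih => intro w; exact not_congr (ih w)
  | and φ ψ ih1 ih2 => intro w; exact and_congr (ih1 w) (ih2 w)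
  | box m φ ih => intro w; exact forall_congr' fun v => imp_congr Iff.rfl (ih v)

theorem PVal_taut {M : Type} (F : KFrame M) (V : ℕ → F.W → Prop) (w : F.W)
    (φ : PF M) : tautEval (fun ψ => PVal (F := F) V ψ w) φ ↔ PVal (F := F) V φ w := by
  induction φ with
  | atom n => exact Iff.rfl
  | neg φ ih => exact not_congr ih
  | and φ ψ ih1 ih2 => exact and_congr ih1 ih2
  | box m φ ih => exact Iff.rfl

theorem PVal_imp {M : Type} (F : KFrame M) (V : ℕ → F.W → Prop) (w : F.W)
    (φ ψ : PF M) : PVal (F := F) V (PF.imp φ ψ) w ↔ (PVal (F := F) V φ w → PVal (F := F) V ψ w) := by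
  simp only [PF.imp, PVal]; tauto

theorem PVal_dia {M : Type} (F : KFrame M) (V : ℕ → F.W → Prop) (w : F.W) (m : M)
    (φ : PF M) : PVal (F := F) V (PF.dia m φ) w ↔ ∃ v, F.R m w v ∧ PVal (F := F) V φ v := by
  simp only [PF.dia, PVal]; push Not; rfl

theorem validLogic {M : Type} (F : KFrame M) : IsPLogic {φ | PValid F φ} where
  taut φ h V w := (PVal_taut F V w φ).1 (h _)
  kax m n k V w := by
    simp only [PVal_imp]
    intro h1 h2 v hv
    exact (PVal_imp F V v _ _).1 (h1 v hv) (h2 v hv)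
  mp φ ψ h1 h2 V w := (PVal_imp F V w _ _).1 (h1 V w) (h2 V w)
  nec m φ h V w v _ := h V v
  subst σ φ h V w := (PVal_subst F σ V φ w).2 (h _ w)

/-- bounded morphisms -/
structure BM {M : Type} (F G : KFrame M) (f : F.W → G.W) : Prop where
  forth : ∀ m w v, F.R m w v → G.R m (f w) (f v)
  back : ∀ m w v', G.R m (f w) v' → ∃ v, F.R m w v ∧ f v = v'

theorem BM.val {M : Type} {F G : KFrame M} {f : F.W → G.W} (h : BM F G f)
    (V : ℕ → G.W → Prop) (φ : PF M) : ∀ w : F.W,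
    PVal (F := F) (fun n w => V n (f w)) φ w ↔ PVal (F := G) V φ (f w) := by
  induction φ with
  | atom n => intro w; exact Iff.rfl
  | neg φ ih => intro w; exact not_congr (ih w)
  | and φ ψ ih1 ih2 => intro w; exact and_congr (ih1 w) (ih2 w)
  | box m φ ih =>
    intro w
    constructor
    · intro hw v' hv'
      obtain ⟨v, hv, rfl⟩ := h.back m w v' hv'
      exact (ih v).1 (hw v hv)
    · intro hw v hv
      exact (ih v).2 (hw _ (h.forth m w v hv))

/-- validity through a jointly surjective family of bounded morphisms -/
theorem FrameFor_of_cover {M : Type} {G : KFrame M} {L : Set (PF M)}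
    (h : ∀ w : G.W, ∃ (F : KFrame M) (f : F.W → G.W), FrameFor F L ∧ BM F G f ∧ ∃ w', f w' = w) :
    FrameFor G L := by
  intro φ hφ V w
  obtain ⟨F, f, hF, hf, w', rfl⟩ := h w
  exact (hf.val V φ w').1 (hF φ hφ _ w')

theorem mapOp_subst {M M' : Type} (f : M → M') (σ : ℕ → PF M) (φ : PF M) :
    PF.mapOp f (PF.substP σ φ) = PF.substP (fun n => PF.mapOp f (σ n)) (PF.mapOp f φ) := by
  induction φ with
  | atom n => rfl
  | neg φ ih => simp only [PF.substP, PF.mapOp, ih]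
  | and φ ψ ih1 ih2 => simp only [PF.substP, PF.mapOp, ih1, ih2]
  | box m φ ih => simp only [PF.substP, PF.mapOp, ih]

theorem tautEval_mapOp {M M' : Type} (f : M → M') (v : PF M' → Prop) (φ : PF M) :
    tautEval v (PF.mapOp f φ) ↔ tautEval (fun ψ => v (PF.mapOp f ψ)) φ := by
  induction φ with
  | atom n => exact Iff.rfl
  | neg φ ih => exact not_congr ih
  | and φ ψ ih1 ih2 => exact and_congr ih1 ih2
  | box m φ ih => exact Iff.rfl

theorem IsPLogic.comap {M M' : Type} {L : Set (PF M')} (h : IsPLogic L) (f : M → M') :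
    IsPLogic {φ : PF M | PF.mapOp f φ ∈ L} where
  taut φ hφ := h.taut _ fun v => (tautEval_mapOp f v φ).2 (hφ _)
  kax m n k := h.kax (f m) n k
  mp φ ψ h1 h2 := h.mp _ _ h1 h2
  nec m φ hφ := h.nec (f m) _ hφ
  subst σ φ hφ := by
    change PF.mapOp f (PF.substP σ φ) ∈ L
    rw [mapOp_subst]; exact h.subst _ _ hφ

theorem IsPLogic.sInter {M : Type} {S : Set (Set (PF M))} (h : ∀ L ∈ S, IsPLogic L) :
    IsPLogic (⋂₀ S) where
  taut φ hφ L hL := (h L hL).taut φ hφ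
  kax m n k L hL := (h L hL).kax m n k
  mp φ ψ h1 h2 L hL := (h L hL).mp φ ψ (h1 L hL) (h2 L hL)
  nec m φ h1 L hL := (h L hL).nec m φ (h1 L hL)
  subst σ φ h1 L hL := (h L hL).subst σ φ (h1 L hL)

theorem isPLogic_LS5 {M : Type} (d : DSem) (L : Set (PF M)) : IsPLogic (LS5 d L) := by
  cases d
  · exact IsPLogic.sInter fun L h => h.1
  · exact IsPLogic.sInter fun L h => h.1

theorem isPLogic_fusion {M1 M2 : Type} (L1 : Set (PF (Option M1))) (L2 : Set (PF (Option M2))) :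
    IsPLogic (fusionE L1 L2) := IsPLogic.sInter fun L h => h.1

theorem LS5_least {M : Type} (d : DSem) (L : Set (PF M)) (L' : Set (PF (Option M)))
    (h : IsPLogic L') (hL : ∀ φ ∈ L, PF.mapOp Option.some φ ∈ L')
    (hT : PF.imp (.box none (.atom 0)) (.atom 0) ∈ L')
    (h4 : PF.imp (.box none (.atom 0)) (.box none (.box none (.atom 0))) ∈ L')
    (h5 : PF.imp (PF.dia none (.atom 0)) (.box none (PF.dia none (.atom 0))) ∈ L')
    (hl : ∀ m, lcom m ∈ L') (hr : d = .cd → ∀ m, rcom m ∈ L') : LS5 d L ⊆ L' := by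
  have hx : LS5xd L ⊆ L' := by
    apply Set.sInter_subset_of_mem
    refine ⟨h, ?_, ?_, hl⟩
    · rintro _ ⟨φ, hφ, rfl⟩; exact hL φ hφ
    · rintro _ ⟨φ, hφ, rfl⟩
      exact hφ {φ | PF.mapOp (fun _ => (none : Option M)) φ ∈ L'}
        ⟨h.comap _, hT, h4, h5⟩
  cases d
  · exact hx
  · exact Set.sInter_subset_of_mem ⟨h, hx, hr rfl⟩

theorem xd_sub {M : Type} (d : DSem) (L : Set (PF M)) : LS5xd L ⊆ LS5 d L := by
  cases d
  · exact subset_rfl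
  · exact Set.subset_sInter fun L' h => h.2.1

theorem L_sub {M : Type} (d : DSem) (L : Set (PF M)) (φ) (hφ : φ ∈ L) :
    PF.mapOp Option.some φ ∈ LS5 d L :=
  xd_sub d L fun _ h => h.2.1 ⟨φ, hφ, rfl⟩

theorem S5_sub {M : Type} (d : DSem) (L : Set (PF M)) : ContainsS5 (LS5 d L) none := by
  have key : ∀ φ ∈ S5L, PF.mapOp (fun _ => (none : Option M)) φ ∈ LS5 d L :=
    fun φ hφ => xd_sub d L fun _ h => h.2.2.1 ⟨φ, hφ, rfl⟩
  exact ⟨key (PF.imp (.box () (.atom 0)) (.atom 0)) fun _ h => h.2.1,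
    key (PF.imp (.box () (.atom 0)) (.box () (.box () (.atom 0)))) fun _ h => h.2.2.1,
    key (PF.imp (PF.dia () (.atom 0)) (.box () (PF.dia () (.atom 0)))) fun _ h => h.2.2.2⟩

theorem lcom_mem {M : Type} (d : DSem) (L : Set (PF M)) (m) : lcom m ∈ LS5 d L :=
  xd_sub d L fun _ h => h.2.2.2 m

theorem rcom_mem {M : Type} (L : Set (PF M)) (m) : rcom m ∈ LS5 .cd L :=
  fun _ h => h.2.2 m

/-- first-order frame conditions -/
structure FC {M : Type} (d : DSem) (F : KFrame (Option M)) : Prop where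
  eqv : Equivalence (F.R none)
  lc : ∀ m w v u, F.R none w v → F.R (some m) v u → ∃ w', F.R (some m) w w' ∧ F.R none w' u
  rc : d = .cd → ∀ m w v u, F.R (some m) w v → F.R none v u →
    ∃ v', F.R none w v' ∧ F.R (some m) v' u

theorem FC_of_frame {M : Type} {d : DSem} {L : Set (PF M)} {F : KFrame (Option M)}
    (h : FrameFor F (LS5 d L)) : FC d F := by
  obtain ⟨hT, h4, h5⟩ := S5_sub d L
  have refl : ∀ w, F.R none w w := fun w => by
    have := h _ hT (fun _ v => F.R none w v) w
    rw [PVal_imp] at this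
    exact this fun v hv => hv
  have eu : ∀ w v u, F.R none w v → F.R none w u → F.R none u v := fun w v u hv hu => by
    have := h _ h5 (fun _ x => x = v) w
    rw [PVal_imp] at this
    have h2 := this ((PVal_dia F _ w none _).2 ⟨v, hv, rfl⟩) u hu
    rw [PVal_dia] at h2
    obtain ⟨x, hx, rfl⟩ := h2
    exact hx
  refine ⟨⟨refl, fun {x y} hxy => eu _ _ _ (refl x) hxy,
    fun {x y z} hxy hyz => eu y z x hyz (eu _ _ _ (refl x) hxy)⟩, ?_, ?_⟩
  · intro m w v u hv hu
    have := h _ (lcom_mem d L m) (fun _ x => ∃ w', F.R (some m) w w' ∧ F.R none w' x) w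
    rw [lcom, PVal_imp] at this
    exact this (fun w' hw' x hx => ⟨w', hw', hx⟩) v hv u hu
  · rintro rfl m w v u hv hu
    have := h _ (rcom_mem L m) (fun _ x => ∃ v', F.R none w v' ∧ F.R (some m) v' x) w
    rw [rcom, PVal_imp] at this
    exact this (fun w' hw' x hx => ⟨w', hw', hx⟩) v hv u hu

theorem frame_of_FC {M : Type} {d : DSem} {L : Set (PF M)} {F : KFrame (Option M)}
    (h : FC d F) (hL : FrameFor (F.red some) L) : FrameFor F (LS5 d L) := by
  refine LS5_least d L {φ | PValid F φ} (validLogic F) ?_ ?_ ?_ ?_ ?_ ?_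
  · intro φ hφ V w
    exact (PVal_mapOp F some V φ w).2 (hL φ hφ V w)
  · intro V w
    rw [PVal_imp]
    exact fun h1 => h1 w (h.eqv.refl w)
  · intro V w
    rw [PVal_imp]
    exact fun h1 v hv u hu => h1 u (h.eqv.trans hv hu)
  · intro V w
    rw [PVal_imp, PVal_dia]
    rintro ⟨v, hv, hv'⟩ u hu
    rw [PVal_dia]
    exact ⟨v, h.eqv.trans (h.eqv.symm hu) hv, hv'⟩
  · intro m V w
    rw [lcom, PVal_imp]
    intro h1 v hv u hu
    obtain ⟨w', a, b⟩ := h.lc m w v u hv hu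
    exact h1 w' a u b
  · intro hd m V w
    rw [rcom, PVal_imp]
    intro h1 v hv u hu
    obtain ⟨w', a, b⟩ := h.rc hd m w v u hv hu
    exact h1 w' a u b

theorem red_frame {M : Type} {d : DSem} {L : Set (PF M)} {F : KFrame (Option M)}
    (h : FrameFor F (LS5 d L)) : FrameFor (F.red some) L :=
  fun φ hφ V w => (PVal_mapOp F some V φ w).1 (h _ (L_sub d L φ hφ) V w)

/-- product of a frame with an equivalence relation -/
def prodF {M : Type} (F : KFrame (Option M)) (K : Type) (hK : Nonempty K) (E : K → K → Prop) :
    KFrame (Option M) where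
  W := F.W × K
  ne := by have := F.ne; infer_instance
  R o p q := match o with
    | none => F.R none p.1 q.1 ∧ E p.2 q.2
    | some m => F.R (some m) p.1 q.1 ∧ p.2 = q.2

theorem prodF_frame {M : Type} {d : DSem} {L : Set (PF M)} {F : KFrame (Option M)}
    (h : FrameFor F (LS5 d L)) (K : Type) (hK : Nonempty K) (E : K → K → Prop)
    (hE : Equivalence E) : FrameFor (prodF F K hK E) (LS5 d L) := by
  have hc := FC_of_frame h
  apply frame_of_FC
  · refine ⟨⟨fun w => ⟨hc.eqv.refl _, hE.refl _⟩,
      fun h => ⟨hc.eqv.symm h.1, hE.symm h.2⟩,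
      fun h h' => ⟨hc.eqv.trans h.1 h'.1, hE.trans h.2 h'.2⟩⟩, ?_, ?_⟩
    · rintro m ⟨w, a⟩ ⟨v, b⟩ ⟨u, c⟩ ⟨h1, h2⟩ ⟨h3, h4⟩
      obtain ⟨w', h5, h6⟩ := hc.lc m w v u h1 h3
      obtain rfl : b = c := h4
      exact ⟨(w', a), ⟨h5, rfl⟩, ⟨h6, h2⟩⟩
    · rintro hd m ⟨w, a⟩ ⟨v, b⟩ ⟨u, c⟩ ⟨h1, h2⟩ ⟨h3, h4⟩
      obtain ⟨w', h5, h6⟩ := hc.rc hd m w v u h1 h3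
      obtain rfl : a = b := h2
      exact ⟨(w', c), ⟨h5, h4⟩, ⟨h6, rfl⟩⟩
  · apply FrameFor_of_cover
    rintro ⟨w, a⟩
    refine ⟨F.red some, fun v => (v, a), red_frame h, ⟨?_, ?_⟩, w, rfl⟩
    · intro m w v hwv; exact ⟨hwv, rfl⟩
    · rintro m w ⟨v, b⟩ ⟨h1, h2⟩
      obtain rfl : a = b := h2
      exact ⟨v, h1, rfl⟩

theorem prodF_BM {M : Type} (F : KFrame (Option M)) (K : Type) (hK : Nonempty K)
    (E : K → K → Prop) (hE : Equivalence E) : BM (prodF F K hK E) F Prod.fst where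
  forth m w v h := by cases m <;> exact h.1
  back m w v' h := by
    cases m
    · exact ⟨(v', w.2), ⟨h, hE.refl _⟩, rfl⟩
    · exact ⟨(v', w.2), ⟨h, rfl⟩, rfl⟩

/-- disjoint unions -/
def sigF {M : Type} {I : Type} (hI : Nonempty I) (F : I → KFrame M) : KFrame M where
  W := Σ i, (F i).W
  ne := by
    obtain ⟨i⟩ := hI
    obtain ⟨w⟩ := (F i).ne
    exact ⟨⟨i, w⟩⟩
  R m p q := ∃ h : p.1 = q.1, (F q.1).R m (h ▸ p.2) q.2

theorem sigF_BM {M : Type} {I : Type} (hI : Nonempty I) (F : I → KFrame M) (i : I) :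
    BM (F i) (sigF hI F) (fun w => ⟨i, w⟩) where
  forth m w v h := ⟨rfl, h⟩
  back m w v' h := by
    obtain ⟨j, v⟩ := v'
    obtain ⟨h1, h2⟩ := h
    obtain rfl : i = j := h1
    exact ⟨v, h2, rfl⟩

theorem sigF_frame {M : Type} {I : Type} (hI : Nonempty I) (F : I → KFrame M) {L : Set (PF M)}
    (h : ∀ i, FrameFor (F i) L) : FrameFor (sigF hI F) L := by
  apply FrameFor_of_cover
  rintro ⟨i, w⟩
  exact ⟨F i, _, h i, sigF_BM hI F i, w, rfl⟩

theorem fusion_frame {M1 M2 : Type} {L1 : Set (PF (Option M1))} {L2 : Set (PF (Option M2))}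
    {G : KFrame (Option (M1 ⊕ M2))} (h1 : FrameFor (G.red (Option.map Sum.inl)) L1)
    (h2 : FrameFor (G.red (Option.map Sum.inr)) L2) : FrameFor G (fusionE L1 L2) := by
  intro φ hφ
  refine hφ {φ | PValid G φ} ⟨validLogic G, ?_, ?_⟩
  · rintro _ ⟨ψ, hψ, rfl⟩ V w
    exact (PVal_mapOp G _ V ψ w).2 (h1 ψ hψ V w)
  · rintro _ ⟨ψ, hψ, rfl⟩ V w
    exact (PVal_mapOp G _ V ψ w).2 (h2 ψ hψ V w)

/-- erasing `□_E` -/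
def er {M : Type} : PF (Option M) → PF M
  | .atom n => .atom n
  | .neg φ => .neg (er φ)
  | .and φ ψ => .and (er φ) (er ψ)
  | .box none φ => er φ
  | .box (some m) φ => .box m (er φ)

theorem er_subst {M : Type} (σ : ℕ → PF (Option M)) (φ : PF (Option M)) :
    er (PF.substP σ φ) = PF.substP (fun n => er (σ n)) (er φ) := by
  induction φ with
  | atom n => rfl
  | neg φ ih => simp only [PF.substP, er, ih]
  | and φ ψ ih1 ih2 => simp only [PF.substP, er, ih1, ih2]
  | box m φ ih => cases m <;> simp only [PF.substP, er, ih]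

theorem er_map {M : Type} (φ : PF M) : er (PF.mapOp some φ) = φ := by
  induction φ with
  | atom n => rfl
  | neg φ ih => simp only [PF.mapOp, er, ih]
  | and φ ψ ih1 ih2 => simp only [PF.mapOp, er, ih1, ih2]
  | box m φ ih => simp only [PF.mapOp, er, ih]

theorem tautEval_er {M : Type} (v : PF M → Prop) (φ : PF (Option M)) :
    tautEval v (er φ) ↔ tautEval (fun ψ => tautEval v (er ψ)) φ := by
  induction φ with
  | atom n => exact Iff.rfl
  | neg φ ih => exact not_congr ih
  | and φ ψ ih1 ih2 => exact and_congr ih1 ih2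
  | box m φ ih => exact Iff.rfl

theorem er_imp {M : Type} (φ ψ : PF (Option M)) : er (PF.imp φ ψ) = PF.imp (er φ) (er ψ) := rfl

theorem taut_id {M : Type} (φ : PF M) : IsTaut (PF.imp φ φ) := by
  intro v; simp [PF.imp, tautEval]

theorem LS5_con {M : Type} (d : DSem) {L : Set (PF M)} (h : IsPLogic L) (hc : PF.bot ∉ L) :
    PF.bot ∉ LS5 d L := by
  intro hb
  apply hc
  have : LS5 d L ⊆ {φ | er φ ∈ L} := by
    refine LS5_least d L _ ?_ ?_ ?_ ?_ ?_ ?_ ?_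
    · refine ⟨?_, ?_, ?_, ?_, ?_⟩
      · intro φ hφ
        exact h.taut _ fun v => (tautEval_er v φ).2 (hφ _)
      · intro m n k
        cases m with
        | none => exact h.taut _ (taut_id _)
        | some m => exact h.kax m n k
      · intro φ ψ h1 h2; exact h.mp _ _ h1 h2
      · intro m φ h1
        cases m with
        | none => exact h1
        | some m => exact h.nec m _ h1
      · intro σ φ h1
        change er _ ∈ L
        rw [er_subst]; exact h.subst _ _ h1
    · intro φ hφ
      change er _ ∈ L
      rw [er_map]; exact hφ
    · exact h.taut _ (taut_id _)
    · exact h.taut _ (taut_id _)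
    · exact h.taut _ (taut_id _)
    · exact fun m => h.taut _ (taut_id _)
    · exact fun _ m => h.taut _ (taut_id _)
  exact this hb

/-- conservativity: product of two frames -/
theorem prod_fusion {M1 M2 : Type} {d : DSem} {L1 : Set (PF M1)} {L2 : Set (PF M2)}
    {F1 : KFrame (Option M1)} {F2 : KFrame (Option M2)} (h1 : FrameFor F1 (LS5 d L1))
    (h2 : FrameFor F2 (LS5 d L2)) :
    ∃ G : KFrame (Option (M1 ⊕ M2)), FrameFor G (fusionE (LS5 d L1) (LS5 d L2)) ∧
      (∃ f : G.W → F1.W, BM (G.red (Option.map Sum.inl)) F1 f ∧ Function.Surjective f) ∧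
      (∃ f : G.W → F2.W, BM (G.red (Option.map Sum.inr)) F2 f ∧ Function.Surjective f) := by
  have c1 := FC_of_frame h1
  have c2 := FC_of_frame h2
  let G : KFrame (Option (M1 ⊕ M2)) :=
    { W := F1.W × F2.W
      ne := by have := F1.ne; have := F2.ne; infer_instance
      R := fun o p q => match o with
        | none => F1.R none p.1 q.1 ∧ F2.R none p.2 q.2
        | some (Sum.inl m) => F1.R (some m) p.1 q.1 ∧ p.2 = q.2
        | some (Sum.inr m) => F2.R (some m) p.2 q.2 ∧ p.1 = q.1 }
  have b1 : BM (G.red (Option.map Sum.inl)) (prodF F1 F2.W F2.ne (F2.R none)) id := by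
    constructor
    · rintro (_ | m) w v h <;> exact h
    · rintro (_ | m) w v h <;> exact ⟨v, h, rfl⟩
  have b1' : BM (prodF F1 F2.W F2.ne (F2.R none)) (G.red (Option.map Sum.inl)) id := by
    constructor
    · rintro (_ | m) w v h <;> exact h
    · rintro (_ | m) w v h <;> exact ⟨v, h, rfl⟩
  have b2 : BM (G.red (Option.map Sum.inr)) (prodF F2 F1.W F1.ne (F1.R none)) Prod.swap := by
    constructor
    · rintro (_ | m) w v h
      · exact ⟨h.2, h.1⟩
      · exact h
    · rintro (_ | m) w v h
      · exact ⟨v.swap, ⟨h.2, h.1⟩, Prod.swap_swap v⟩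
      · exact ⟨v.swap, h, Prod.swap_swap v⟩
  have b2' : BM (prodF F2 F1.W F1.ne (F1.R none)) (G.red (Option.map Sum.inr)) Prod.swap := by
    constructor
    · rintro (_ | m) w v h
      · exact ⟨h.2, h.1⟩
      · exact h
    · rintro (_ | m) w v h
      · exact ⟨v.swap, ⟨h.2, h.1⟩, Prod.swap_swap v⟩
      · exact ⟨v.swap, h, Prod.swap_swap v⟩
  refine ⟨G, fusion_frame ?_ ?_, ⟨Prod.fst, ?_, ?_⟩, ⟨Prod.snd, ?_, ?_⟩⟩
  · apply FrameFor_of_cover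
    exact fun w => ⟨_, _, prodF_frame h1 F2.W F2.ne (F2.R none) c2.eqv, b1', w, rfl⟩
  · apply FrameFor_of_cover
    exact fun w => ⟨_, _, prodF_frame h2 F1.W F1.ne (F1.R none) c1.eqv, b2', w.swap,
      Prod.swap_swap w⟩
  · constructor
    · rintro (_ | m) w v h <;> exact h.1
    · rintro (_ | m) w v h
      · exact ⟨(v, w.2), ⟨h, c2.eqv.refl _⟩, rfl⟩
      · exact ⟨(v, w.2), ⟨h, rfl⟩, rfl⟩
  · intro w; obtain ⟨u⟩ := F2.ne; exact ⟨(w, u), rfl⟩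
  · constructor
    · rintro (_ | m) w v h
      · exact h.2
      · exact h.1
    · rintro (_ | m) w v h
      · exact ⟨(w.1, v), ⟨c1.eqv.refl _, h⟩, rfl⟩
      · exact ⟨(w.1, v), ⟨h, rfl⟩, rfl⟩
  · intro w; obtain ⟨u⟩ := F1.ne; exact ⟨(u, w), rfl⟩



/-! ### Part C: gluing -/

theorem equiv_of_fibers {α β A : Type} (f : α → A) (g : β → A)
    (h : ∀ a, Nonempty ({x // f x = a} ≃ {y // g y = a})) :
    ∃ e : α ≃ β, ∀ x, g (e x) = f x := by
  have h := fun a => Classical.choice (h a)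
  let e := (Equiv.sigmaFiberEquiv f).symm.trans ((Equiv.sigmaCongrRight h).trans
    (Equiv.sigmaFiberEquiv g))
  refine ⟨e, fun x => ?_⟩
  exact ((h (f x)) ⟨x, rfl⟩).2

def stD {W K : Type} (E : W → W → Prop) (hE : Equivalence E) : Setoid (W × (K × K)) where
  r p q := E p.1 q.1 ∧ p.2.2 = q.2.2
  iseqv := ⟨fun p => ⟨hE.refl _, rfl⟩, fun h => ⟨hE.symm h.1, h.2.symm⟩,
    fun h h' => ⟨hE.trans h.1 h'.1, h.2.trans h'.2⟩⟩

/-- the set of labels occurring in a class -/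
def kap {W K T : Type} (E : W → W → Prop) (hE : Equivalence E) (τ : W → T) :
    Quotient (stD (K := K) E hE) → Set T :=
  Quotient.lift (fun p => τ '' {v | E p.1 v}) (by
    rintro p q ⟨h, _⟩
    have : {v | E p.1 v} = {v | E q.1 v} := by
      ext v
      exact ⟨fun h' => hE.trans (hE.symm h) h', fun h' => hE.trans h h'⟩
    simp only [this])

theorem side_fib1 {W K T : Type} (E : W → W → Prop) (hE : Equivalence E) (τ : W → T)
    (iW : W ↪ K) (iK : K × K ↪ K) (Q : Set T) (w : W) (hw : τ '' {v | E w v} = Q) :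
    Nonempty ({c : Quotient (stD (K := K) E hE) // kap E hE τ c = Q} ≃ K) := by
  apply Function.Embedding.antisymm
  · refine ⟨fun c => iK (iW c.1.out.1, iK c.1.out.2), ?_⟩
    intro c c' h
    have h := iK.injective h
    simp only [Prod.mk.injEq] at h
    have h1 := iW.injective h.1
    have h2 := iK.injective h.2
    apply Subtype.ext
    rw [← Quotient.out_eq c.1, ← Quotient.out_eq c'.1, Prod.ext h1 h2]
  · refine ⟨fun k => ⟨Quotient.mk _ (w, (k, k)), hw⟩, ?_⟩
    intro k k' h
    have h := congrArg Subtype.val h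
    exact (Quotient.exact h).2

theorem side_fib2 {W K T : Type} (E : W → W → Prop) (hE : Equivalence E) (τ : W → T)
    (iW : W ↪ K) (iK : K × K ↪ K) (c : Quotient (stD (K := K) E hE)) (t : T)
    (ht : t ∈ kap E hE τ c) :
    Nonempty ({d : W × (K × K) // (Quotient.mk (stD (K := K) E hE) d, τ d.1) = (c, t)} ≃ K) := by
  obtain ⟨p, rfl⟩ := Quotient.exists_rep c
  obtain ⟨v, hv, hvt⟩ := ht
  apply Function.Embedding.antisymm
  · refine ⟨fun d => iK (iW d.1.1, iK d.1.2), ?_⟩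
    intro d d' h
    have h := iK.injective h
    simp only [Prod.mk.injEq] at h
    exact Subtype.ext (Prod.ext (iW.injective h.1) (iK.injective h.2))
  · refine ⟨fun k => ⟨(v, (k, p.2.2)), ?_⟩, ?_⟩
    · refine Prod.ext (Quotient.sound ?_) hvt
      exact ⟨hE.symm hv, rfl⟩
    · intro k k' h
      have h := congrArg (fun x => x.1.2.1) h
      exact h

theorem fib2_empty {W K T : Type} (E : W → W → Prop) (hE : Equivalence E) (τ : W → T)
    (c : Quotient (stD (K := K) E hE)) (t : T)
    (d : W × (K × K)) (hd : (Quotient.mk (stD (K := K) E hE) d, τ d.1) = (c, t)) :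
    t ∈ kap E hE τ c := by
  simp only [Prod.mk.injEq] at hd
  obtain ⟨rfl, rfl⟩ := hd
  exact ⟨d.1, hE.refl _, rfl⟩

theorem match_equiv {W1 W2 T : Type} (E1 : W1 → W1 → Prop) (E2 : W2 → W2 → Prop)
    (hE1 : Equivalence E1) (hE2 : Equivalence E2) (τ1 : W1 → T) (τ2 : W2 → T)
    (h12 : ∀ w, ∃ w', τ1 '' {v | E1 w v} = τ2 '' {v | E2 w' v})
    (h21 : ∀ w, ∃ w', τ2 '' {v | E2 w v} = τ1 '' {v | E1 w' v}) :
    ∃ (K : Type) (_ : Nonempty K) (e : W1 × (K × K) ≃ W2 × (K × K)),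
      (∀ p, τ2 (e p).1 = τ1 p.1) ∧
      (∀ p q, (E1 p.1 q.1 ∧ p.2.2 = q.2.2) ↔ (E2 (e p).1 (e q).1 ∧ (e p).2.2 = (e q).2.2)) := by
  let K := W1 ⊕ W2 ⊕ ℕ
  have hinf : Infinite K := inferInstance
  have hcard : Cardinal.mk (K × K) = Cardinal.mk K := by
    rw [Cardinal.mk_prod, Cardinal.lift_id]
    exact Cardinal.mul_eq_self (Cardinal.aleph0_le_mk K)
  obtain ⟨eK⟩ := Cardinal.eq.1 hcard
  let iK : K × K ↪ K := eK.toEmbedding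
  let i1 : W1 ↪ K := ⟨Sum.inl, Sum.inl_injective⟩
  let i2 : W2 ↪ K := ⟨fun w => Sum.inr (Sum.inl w), fun a b h => Sum.inl_injective (Sum.inr_injective h)⟩
  obtain ⟨eC, heC⟩ := equiv_of_fibers (kap (K := K) E1 hE1 τ1) (kap (K := K) E2 hE2 τ2) (by
    intro Q
    by_cases hQ : ∃ w, τ1 '' {v | E1 w v} = Q
    · obtain ⟨w, hw⟩ := hQ
      obtain ⟨w', hw'⟩ := h12 w
      obtain ⟨a⟩ := side_fib1 E1 hE1 τ1 i1 iK Q w hw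
      obtain ⟨b⟩ := side_fib1 E2 hE2 τ2 i2 iK Q w' (hw'.symm.trans hw)
      exact ⟨a.trans b.symm⟩
    · have : IsEmpty {x // kap (K := K) E1 hE1 τ1 x = Q} := by
        constructor
        rintro ⟨c, hc⟩
        induction c using Quotient.ind with
        | _ p => exact hQ ⟨p.1, hc⟩
      have : IsEmpty {x // kap (K := K) E2 hE2 τ2 x = Q} := by
        constructor
        rintro ⟨c, hc⟩
        induction c using Quotient.ind with
        | _ p =>
          obtain ⟨w', hw'⟩ := h21 p.1
          exact hQ ⟨w', hw'.symm.trans hc⟩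
      exact ⟨Equiv.equivOfIsEmpty _ _⟩)
  obtain ⟨e, he⟩ := equiv_of_fibers
    (fun d : W1 × (K × K) => (eC (Quotient.mk (stD (K := K) E1 hE1) d), τ1 d.1))
    (fun d : W2 × (K × K) => (Quotient.mk (stD (K := K) E2 hE2) d, τ2 d.1)) (by
    rintro ⟨c, t⟩
    obtain ⟨c, rfl⟩ := eC.surjective c
    have hh : ∀ d : W1 × (K × K), ((eC (Quotient.mk (stD (K := K) E1 hE1) d), τ1 d.1) = (eC c, t)) ↔
      ((Quotient.mk (stD (K := K) E1 hE1) d, τ1 d.1) = (c, t)) := by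
      intro d; simp only [Prod.mk.injEq, eC.injective.eq_iff]
    by_cases ht : t ∈ kap E1 hE1 τ1 c
    · obtain ⟨a⟩ := side_fib2 E1 hE1 τ1 i1 iK c t ht
      obtain ⟨b⟩ := side_fib2 E2 hE2 τ2 i2 iK (eC c) t (by rw [heC]; exact ht)
      exact ⟨(Equiv.subtypeEquivRight hh).trans (a.trans b.symm)⟩
    · have : IsEmpty {x : W1 × (K × K) //
          (eC (Quotient.mk (stD (K := K) E1 hE1) x), τ1 x.1) = (eC c, t)} :=
        ⟨fun x => ht (fib2_empty E1 hE1 τ1 c t x.1 ((hh x.1).1 x.2))⟩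
      have : IsEmpty {x : W2 × (K × K) //
          (Quotient.mk (stD (K := K) E2 hE2) x, τ2 x.1) = (eC c, t)} :=
        ⟨fun x => ht (by rw [← heC]; exact fib2_empty E2 hE2 τ2 (eC c) t x.1 x.2)⟩
      exact ⟨Equiv.equivOfIsEmpty _ _⟩)
  simp only [Prod.mk.injEq] at he
  refine ⟨K, inferInstance, e, fun p => (he p).2, fun p q => ?_⟩
  have h1 : (E1 p.1 q.1 ∧ p.2.2 = q.2.2) ↔
      (Quotient.mk (stD (K := K) E1 hE1) p = Quotient.mk (stD (K := K) E1 hE1) q) :=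
    ⟨fun h => Quotient.sound h, fun h => Quotient.exact h⟩
  have h2 : (E2 (e p).1 (e q).1 ∧ (e p).2.2 = (e q).2.2) ↔
      (Quotient.mk (stD (K := K) E2 hE2) (e p) = Quotient.mk (stD (K := K) E2 hE2) (e q)) :=
    ⟨fun h => Quotient.sound h, fun h => Quotient.exact h⟩
  rw [h1, h2, (he p).1, (he q).1, eC.injective.eq_iff]

theorem BM_of_equiv {M : Type} {F G : KFrame M} (e : F.W ≃ G.W)
    (h : ∀ o w v, F.R o w v ↔ G.R o (e w) (e v)) : BM F G e ∧ BM G F e.symm := by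
  constructor
  · constructor
    · intro o w v hh; exact (h o w v).1 hh
    · intro o w v hh
      refine ⟨e.symm v, (h o w _).2 ?_, e.apply_symm_apply v⟩
      rw [e.apply_symm_apply]; exact hh
  · constructor
    · intro o w v hh
      rw [h, e.apply_symm_apply, e.apply_symm_apply]; exact hh
    · intro o w v hh
      refine ⟨e v, ?_, e.symm_apply_apply v⟩
      have := (h o _ _).1 hh
      rwa [e.apply_symm_apply] at this

theorem glue {M1 M2 T : Type} {d : DSem} {L1 : Set (PF M1)} {L2 : Set (PF M2)}
    {B1 : KFrame (Option M1)} {B2 : KFrame (Option M2)} (h1 : FrameFor B1 (LS5 d L1))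
    (h2 : FrameFor B2 (LS5 d L2)) (τ1 : B1.W → T) (τ2 : B2.W → T)
    (h12 : ∀ w, ∃ w', τ1 '' {v | B1.R none w v} = τ2 '' {v | B2.R none w' v})
    (h21 : ∀ w, ∃ w', τ2 '' {v | B2.R none w v} = τ1 '' {v | B1.R none w' v}) :
    ∃ (G : KFrame (Option (M1 ⊕ M2))) (π1 : G.W → B1.W) (π2 : G.W → B2.W),
      FrameFor G (fusionE (LS5 d L1) (LS5 d L2)) ∧
      BM (G.red (Option.map Sum.inl)) B1 π1 ∧ BM (G.red (Option.map Sum.inr)) B2 π2 ∧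
      Function.Surjective π1 ∧ ∀ g, τ1 (π1 g) = τ2 (π2 g) := by
  have c1 := FC_of_frame h1
  have c2 := FC_of_frame h2
  obtain ⟨K, hK, e, he1, he2⟩ := match_equiv _ _ c1.eqv c2.eqv τ1 τ2 h12 h21
  have hKK : Nonempty (K × K) := inferInstance
  let E : K × K → K × K → Prop := fun p q => p.2 = q.2
  have hE : Equivalence E := ⟨fun _ => rfl, fun h => Eq.symm h, fun h h' => Eq.trans h h'⟩
  let D1 := prodF B1 (K × K) hKK E
  let D2 := prodF B2 (K × K) hKK E
  let G : KFrame (Option (M1 ⊕ M2)) :=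
    { W := B1.W × (K × K)
      ne := D1.ne
      R := fun o p q => match o with
        | none => D1.R none p q
        | some (Sum.inl m) => D1.R (some m) p q
        | some (Sum.inr m) => D2.R (some m) (e p) (e q) }
  have b1 : BM (G.red (Option.map Sum.inl)) D1 id := by
    constructor
    · rintro (_ | m) w v h <;> exact h
    · rintro (_ | m) w v h <;> exact ⟨v, h, rfl⟩
  have b1' : BM D1 (G.red (Option.map Sum.inl)) id := by
    constructor
    · rintro (_ | m) w v h <;> exact h
    · rintro (_ | m) w v h <;> exact ⟨v, h, rfl⟩
  obtain ⟨b2, b2'⟩ := BM_of_equiv (F := G.red (Option.map Sum.inr)) (G := D2) e (by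
    rintro (_ | m) w v
    · exact he2 w v
    · exact Iff.rfl)
  have p1 := prodF_BM B1 (K × K) hKK E hE
  have p2 := prodF_BM B2 (K × K) hKK E hE
  refine ⟨G, fun g => g.1, fun g => (e g).1, fusion_frame ?_ ?_, ?_, ?_, ?_, ?_⟩
  · apply FrameFor_of_cover
    exact fun w => ⟨_, _, prodF_frame h1 _ hKK E hE, b1', w, rfl⟩
  · apply FrameFor_of_cover
    exact fun w => ⟨_, _, prodF_frame h2 _ hKK E hE, b2', e w, e.symm_apply_apply w⟩
  · constructor
    · intro o w v h; exact p1.forth o _ _ (b1.forth o w v h)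
    · intro o w v' h
      obtain ⟨v, hv, rfl⟩ := p1.back o w v' h
      obtain ⟨u, hu, rfl⟩ := b1.back o w v hv
      exact ⟨u, hu, rfl⟩
  · constructor
    · intro o w v h; exact p2.forth o _ _ (b2.forth o w v h)
    · intro o w v' h
      obtain ⟨v, hv, rfl⟩ := p2.back o (e w) v' h
      obtain ⟨u, hu, rfl⟩ := b2.back o w v hv
      exact ⟨u, hu, rfl⟩
  · intro w
    obtain ⟨k⟩ := hKK
    exact ⟨(w, k), rfl⟩
  · intro g; exact (he1 g).symm



/-! ### Part D: canonical model -/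

structure NTh {M : Type} (Θ : Set (PF M)) : Prop where
  taut : ∀ φ, IsTaut φ → φ ∈ Θ
  kax : ∀ (m : M) (φ ψ : PF M),
    PF.imp (.box m (PF.imp φ ψ)) (PF.imp (.box m φ) (.box m ψ)) ∈ Θ
  mp : ∀ φ ψ, PF.imp φ ψ ∈ Θ → φ ∈ Θ → ψ ∈ Θ
  nec : ∀ m φ, φ ∈ Θ → PF.box m φ ∈ Θ

theorem IsPLogic.nth {M : Type} {L : Set (PF M)} (h : IsPLogic L) : NTh L where
  taut := h.taut
  kax m φ ψ := by
    have := h.subst (fun n => if n = 0 then φ else ψ) _ (h.kax m 0 1)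
    simpa [PF.imp, PF.substP] using this
  mp := h.mp
  nec := h.nec

theorem NTh.glob {M : Type} {L : Set (PF M)} (h : NTh L) (φ : PF M) :
    NTh {ψ | PGlobal L φ ψ} where
  taut ψ hψ := .ax (h.taut ψ hψ)
  kax m a b := .ax (h.kax m a b)
  mp a b h1 h2 := .mp h1 h2
  nec m a h1 := .nec m h1

theorem te_imp {M : Type} (v : PF M → Prop) (φ ψ : PF M) :
    tautEval v (PF.imp φ ψ) ↔ (tautEval v φ → tautEval v ψ) := by
  simp only [PF.imp, tautEval]; tauto

inductive LD {M : Type} (Θ Γ : Set (PF M)) : PF M → Prop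
  | th {φ} : φ ∈ Θ → LD Θ Γ φ
  | prem {φ} : φ ∈ Γ → LD Θ Γ φ
  | mp {φ ψ} : LD Θ Γ (PF.imp φ ψ) → LD Θ Γ φ → LD Θ Γ ψ

section
variable {M : Type} {Θ : Set (PF M)}

theorem LD.mono {Γ Δ : Set (PF M)} (h : Γ ⊆ Δ) {φ : PF M} (hd : LD Θ Γ φ) : LD Θ Δ φ := by
  induction hd with
  | th h1 => exact .th h1
  | prem h1 => exact .prem (h h1)
  | mp _ _ i1 i2 => exact .mp i1 i2

/-- tautological consequence of a list, inside LD -/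
theorem LD.t1 (hΘ : NTh Θ) {Γ : Set (PF M)} {a b : PF M}
    (h : ∀ v, tautEval v a → tautEval v b) (ha : LD Θ Γ a) : LD Θ Γ b :=
  .mp (.th (hΘ.taut _ (fun v => (te_imp v _ _).2 (h v)))) ha

theorem LD.t0 (hΘ : NTh Θ) {Γ : Set (PF M)} {b : PF M}
    (h : ∀ v, tautEval v b) : LD Θ Γ b := .th (hΘ.taut _ h)

theorem LD.t2 (hΘ : NTh Θ) {Γ : Set (PF M)} {a b c : PF M}
    (h : ∀ v, tautEval v a → tautEval v b → tautEval v c) (ha : LD Θ Γ a) (hb : LD Θ Γ b) :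
    LD Θ Γ c :=
  .mp (LD.t1 hΘ (b := PF.imp b c) (fun v h1 => (te_imp v _ _).2 (h v h1)) ha) hb

theorem LD.ded (hΘ : NTh Θ) {Γ : Set (PF M)} {a φ : PF M} (h : LD Θ (insert a Γ) φ) :
    LD Θ Γ (PF.imp a φ) := by
  induction h with
  | th h1 => exact LD.t1 hΘ (fun v h => (te_imp v _ _).2 fun _ => h) (.th h1)
  | prem h1 =>
    rcases h1 with rfl | h1
    · exact LD.t0 hΘ (fun v => (te_imp v _ _).2 fun h => h)
    · exact LD.t1 hΘ (fun v h => (te_imp v _ _).2 fun _ => h) (.prem h1)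
  | mp _ _ i1 i2 =>
    refine LD.t2 hΘ (fun v h1 h2 => ?_) i1 i2
    simp only [te_imp] at *
    exact fun h => h1 h (h2 h)

theorem LD.fin_chain {c : Set (Set (PF M))} (hc : IsChain (· ⊆ ·) c) (hne : c.Nonempty)
    {φ : PF M} (h : LD Θ (⋃₀ c) φ) : ∃ Γ ∈ c, LD Θ Γ φ := by
  induction h with
  | th h1 => obtain ⟨g, hg⟩ := hne; exact ⟨g, hg, .th h1⟩
  | prem h1 => obtain ⟨g, hg, h2⟩ := h1; exact ⟨g, hg, .prem h2⟩
  | mp _ _ i1 i2 =>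
    obtain ⟨g1, hg1, d1⟩ := i1
    obtain ⟨g2, hg2, d2⟩ := i2
    rcases hc.total hg1 hg2 with h | h
    · exact ⟨g2, hg2, .mp (d1.mono h) d2⟩
    · exact ⟨g1, hg1, .mp d1 (d2.mono h)⟩

structure MCS (Θ Γ : Set (PF M)) : Prop where
  sub : Θ ⊆ Γ
  mp : ∀ φ ψ, PF.imp φ ψ ∈ Γ → φ ∈ Γ → ψ ∈ Γ
  neg : ∀ φ, PF.neg φ ∈ Γ ↔ φ ∉ Γ

theorem MCS.ld {Γ : Set (PF M)} (h : MCS Θ Γ) {φ : PF M} (hd : LD Θ Γ φ) : φ ∈ Γ := by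
  induction hd with
  | th h1 => exact h.sub h1
  | prem h1 => exact h1
  | mp _ _ i1 i2 => exact h.mp _ _ i1 i2

theorem MCS.and (hΘ : NTh Θ) {Γ : Set (PF M)} (h : MCS Θ Γ) (a b : PF M) :
    PF.and a b ∈ Γ ↔ a ∈ Γ ∧ b ∈ Γ := by
  constructor
  · intro hh
    exact ⟨h.ld (LD.t1 hΘ (a := PF.and a b) (fun v h => h.1) (.prem hh)),
      h.ld (LD.t1 hΘ (a := PF.and a b) (fun v h => h.2) (.prem hh))⟩
  · rintro ⟨h1, h2⟩
    exact h.ld (LD.t2 hΘ (fun v h h' => ⟨h, h'⟩) (.prem h1) (.prem h2))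

theorem linden (hΘ : NTh Θ) {Γ : Set (PF M)} {φ : PF M} (h : ¬ LD Θ Γ φ) :
    ∃ Δ, Γ ⊆ Δ ∧ MCS Θ Δ ∧ φ ∉ Δ := by
  obtain ⟨Δ, hΓ, hmax⟩ := zorn_subset_nonempty {Δ : Set (PF M) | ¬ LD Θ Δ φ} (by
    intro c hc hch hne
    refine ⟨⋃₀ c, ?_, fun s hs => Set.subset_sUnion_of_mem hs⟩
    intro hh
    obtain ⟨g, hg, hd⟩ := LD.fin_chain hch hne hh
    exact hc hg hd) Γ h
  have hD : ¬ LD Θ Δ φ := hmax.prop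
  have key : ∀ ψ, ψ ∉ Δ → LD Θ Δ (PF.imp ψ φ) := by
    intro ψ hψ
    by_contra hcon
    have : ¬ LD Θ (insert ψ Δ) φ := fun hh => hcon (LD.ded hΘ hh)
    exact hψ (hmax.le_of_ge this (Set.subset_insert _ _) (Set.mem_insert _ _))
  have mem : ∀ ψ, LD Θ Δ ψ → ψ ∈ Δ := by
    intro ψ hψ
    by_contra hcon
    exact hD (.mp (key ψ hcon) hψ)
  refine ⟨Δ, hΓ, ⟨fun ψ hψ => mem _ (.th hψ), fun a b h1 h2 => mem _ (.mp (.prem h1) (.prem h2)),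
    fun ψ => ⟨fun h1 h2 => ?_, fun h1 => ?_⟩⟩, fun hh => hD (.prem hh)⟩
  · exact hD (LD.t2 hΘ (a := PF.neg ψ) (b := ψ) (fun v h h' => absurd h' h) (.prem h1) (.prem h2))
  · by_contra h2
    refine hD (LD.t2 hΘ (fun v h h' => ?_) (key _ h1) (key _ h2))
    simp only [te_imp, tautEval] at h h'
    by_cases hv : tautEval v ψ
    · exact h hv
    · exact h' hv

theorem LD.box (hΘ : NTh Θ) (m : M) {Γ : Set (PF M)} {φ : PF M}
    (h : LD Θ {ψ | PF.box m ψ ∈ Γ} φ) : LD Θ Γ (PF.box m φ) := by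
  induction h with
  | th h1 => exact .th (hΘ.nec m _ h1)
  | prem h1 => exact .prem h1
  | mp _ _ i1 i2 => exact .mp (.mp (.th (hΘ.kax m _ _)) i1) i2

theorem canon (hΘ : NTh Θ) {φ : PF M} (h : φ ∉ Θ) :
    ∃ (F : KFrame M) (V : ℕ → F.W → Prop), (∀ ψ ∈ Θ, ∀ w, PVal (F := F) V ψ w) ∧
      ∃ w, ¬ PVal (F := F) V φ w := by
  have h0 : ¬ LD Θ Θ φ := by
    intro hd
    apply h
    clear h
    induction hd with
    | th h1 => exact h1
    | prem h1 => exact h1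
    | mp _ _ i1 i2 => exact hΘ.mp _ _ i1 i2
  obtain ⟨Δ, -, hΔ, hφ⟩ := linden hΘ h0
  let F : KFrame M := ⟨{Γ : Set (PF M) // MCS Θ Γ}, ⟨⟨Δ, hΔ⟩⟩,
    fun m Γ Δ => ∀ ψ, PF.box m ψ ∈ Γ.1 → ψ ∈ Δ.1⟩
  let V : ℕ → F.W → Prop := fun n Γ => PF.atom n ∈ Γ.1
  have truth : ∀ ψ : PF M, ∀ Γ : F.W, PVal (F := F) V ψ Γ ↔ ψ ∈ Γ.1 := by
    intro ψ
    induction ψ with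
    | atom n => intro Γ; exact Iff.rfl
    | neg a ih => intro Γ; rw [Γ.2.neg, ← ih]; exact Iff.rfl
    | and a b iha ihb => intro Γ; rw [Γ.2.and hΘ, ← iha, ← ihb]; exact Iff.rfl
    | box m a ih =>
      intro Γ
      constructor
      · intro hh
        by_contra hcon
        have : ¬ LD Θ {ψ | PF.box m ψ ∈ Γ.1} a := fun hd => hcon (Γ.2.ld (LD.box hΘ m hd))
        obtain ⟨Δ, hs, hΔ, ha⟩ := linden hΘ this
        exact ha ((ih ⟨Δ, hΔ⟩).1 (hh ⟨Δ, hΔ⟩ (fun ψ hψ => hs hψ)))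
      · intro hh Δ hR
        exact (ih Δ).2 (hR _ hh)
  exact ⟨F, V, fun ψ hψ w => (truth ψ w).2 (w.2.sub hψ), ⟨Δ, hΔ⟩, fun hh => hφ ((truth _ _).1 hh)⟩

/-- semantic entailment in models of the theory gives membership -/
theorem NTh.sem (hΘ : NTh Θ) {φ : PF M}
    (h : ∀ (F : KFrame M) (V : ℕ → F.W → Prop), (∀ ψ ∈ Θ, ∀ w, PVal (F := F) V ψ w) →
      ∀ w, PVal (F := F) V φ w) : φ ∈ Θ := by
  by_contra hcon
  obtain ⟨F, V, h1, w, h2⟩ := canon hΘ hcon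
  exact h2 (h F V h1 w)

end



/-! ### Part E: formula builders -/

section
variable {M M' : Type}

def top : PF M := PF.neg PF.bot
def conj (l : List (PF M)) : PF M := l.foldr PF.and top
def disj (l : List (PF M)) : PF M := PF.neg (conj (l.map PF.neg))
def lit (b : Bool) (ψ : PF M) : PF M := bif b then ψ else PF.neg ψ
def tp (S : List (PF M)) (t : List Bool) : PF M :=
  conj ((List.range S.length).map fun i => lit (t.getD i false) (S.getD i top))
def qs (e : M) (S : List (PF M)) (x : List (List Bool)) : PF M :=
  PF.and (conj (x.map fun t => PF.dia e (tp S t))) (PF.box e (disj (x.map (tp S))))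
def chi (e : M) (S : List (PF M)) (xs : List (List (List Bool))) : PF M :=
  disj (xs.map (qs e S))
def AA (e : M) (S : List (PF M)) (os : List M) (xs : List (List (List Bool))) : ℕ → PF M
  | 0 => top
  | n + 1 => PF.box e (PF.and (chi e S xs) (conj (os.map fun m => PF.box m (AA e S os xs n))))

def sub : PF M → List (PF M)
  | .atom n => [.atom n]
  | .neg φ => .neg φ :: sub φ
  | .and φ ψ => .and φ ψ :: (sub φ ++ sub ψ)
  | .box m φ => .box m φ :: sub φ

def ops : PF M → List M
  | .atom _ => []
  | .neg φ => ops φ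
  | .and φ ψ => ops φ ++ ops ψ
  | .box m φ => m :: ops φ

def sur (f : M → Option M') (c : PF M → ℕ) : PF M → PF M'
  | .atom n => .atom (c (.atom n))
  | .neg φ => .neg (sur f c φ)
  | .and φ ψ => .and (sur f c φ) (sur f c ψ)
  | .box o φ => match f o with
    | some o' => .box o' (sur f c φ)
    | none => .atom (c (.box o φ))

structure Ev (e : M) {W : Type} (E : W → W → Prop) (ev : PF M → W → Prop) : Prop where
  neg : ∀ φ w, ev (.neg φ) w ↔ ¬ ev φ w
  and : ∀ φ ψ w, ev (.and φ ψ) w ↔ ev φ w ∧ ev ψ w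
  boxe : ∀ φ w, ev (.box e φ) w ↔ ∀ v, E w v → ev φ v

theorem Ev.val (F : KFrame M) (V : ℕ → F.W → Prop) (e : M) : Ev e (F.R e) (PVal (F := F) V) :=
  ⟨fun _ _ => Iff.rfl, fun _ _ _ => Iff.rfl, fun _ _ => Iff.rfl⟩

theorem Ev.sur (F : KFrame M') (V : ℕ → F.W → Prop) (e : M) (e' : M') (f : M → Option M')
    (c : PF M → ℕ) (he : f e = some e') :
    Ev e (F.R e') (fun φ w => PVal (F := F) V (sur f c φ) w) := by
  refine ⟨fun _ _ => Iff.rfl, fun _ _ _ => Iff.rfl, fun φ w => ?_⟩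
  simp only [PropML.sur, he, PVal]

section
variable {e : M} {W : Type} {E : W → W → Prop} {ev : PF M → W → Prop} (h : Ev e E ev)
include h

theorem Ev.top (w : W) : ev top w := by
  simp only [PropML.top, PF.bot, h.neg, h.and]; tauto

theorem Ev.imp (a b : PF M) (w : W) : ev (PF.imp a b) w ↔ (ev a w → ev b w) := by
  simp only [PF.imp, h.neg, h.and]; tauto

theorem Ev.conj (l : List (PF M)) (w : W) : ev (conj l) w ↔ ∀ a ∈ l, ev a w := by
  induction l with
  | nil => simp [PropML.conj, h.top]
  | cons a l ih =>
    have : PropML.conj (a :: l) = PF.and a (PropML.conj l) := rfl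
    rw [this, h.and, ih]; simp

theorem Ev.disj (l : List (PF M)) (w : W) : ev (disj l) w ↔ ∃ a ∈ l, ev a w := by
  simp [PropML.disj, h.neg, h.conj]

theorem Ev.dia (a : PF M) (w : W) : ev (PF.dia e a) w ↔ ∃ v, E w v ∧ ev a v := by
  simp [PF.dia, h.neg, h.boxe]

theorem Ev.lit (b : Bool) (a : PF M) (w : W) : ev (lit b a) w ↔ (ev a w ↔ b = true) := by
  cases b <;> simp [PropML.lit, h.neg]

theorem Ev.tp (S : List (PF M)) (t : List Bool) (w : W) :
    ev (tp S t) w ↔ ∀ i (hi : i < S.length), (ev (S[i]) w ↔ t.getD i false = true) := by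
  simp only [PropML.tp, h.conj, List.mem_map, List.mem_range, forall_exists_index, and_imp,
    forall_apply_eq_imp_iff₂, h.lit]
  refine forall_congr' fun i => forall_congr' fun hi => ?_
  rw [List.getD_eq_getElem _ _ hi]

theorem Ev.qs (S : List (PF M)) (x : List (List Bool)) (w : W) :
    ev (qs e S x) w ↔ (∀ t ∈ x, ∃ v, E w v ∧ ev (PropML.tp S t) v) ∧
      (∀ v, E w v → ∃ t ∈ x, ev (PropML.tp S t) v) := by
  simp only [PropML.qs, h.and, h.conj, h.boxe, h.disj, List.mem_map, forall_exists_index, and_imp,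
    forall_apply_eq_imp_iff₂, h.dia, exists_exists_and_eq_and]

theorem Ev.chi (S : List (PF M)) (xs : List (List (List Bool))) (w : W) :
    ev (chi e S xs) w ↔ ∃ x ∈ xs, ev (PropML.qs e S x) w := by
  simp only [PropML.chi, h.disj, List.mem_map, exists_exists_and_eq_and]

theorem Ev.AA_succ (S : List (PF M)) (os : List M) (xs : List (List (List Bool))) (n : ℕ) (w : W) :
    ev (AA e S os xs (n + 1)) w ↔ ∀ v, E w v → (ev (PropML.chi e S xs) v ∧
      ∀ m ∈ os, ev (PF.box m (AA e S os xs n)) v) := by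
  simp only [AA, h.boxe, h.and, h.conj, List.mem_map, forall_exists_index, and_imp,
    forall_apply_eq_imp_iff₂]

theorem Ev.AA_E (hE : Equivalence E) (S : List (PF M)) (os : List M)
    (xs : List (List (List Bool))) (n : ℕ) {w v : W} (hwv : E w v) :
    ev (AA e S os xs n) w ↔ ev (AA e S os xs n) v := by
  cases n with
  | zero => exact iff_of_true (h.top w) (h.top v)
  | succ n =>
    rw [h.AA_succ, h.AA_succ]
    exact ⟨fun hh u hu => hh u (hE.trans hwv hu), fun hh u hu => hh u (hE.trans (hE.symm hwv) hu)⟩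

/-- the label set of a class in which `qs x` is true -/
theorem Ev.qs_labels (S : List (PF M)) (x : List (List Bool)) (w : W)
    (hq : ev (PropML.qs e S x) w) (O : Set (PF M)) (hO : ∀ ψ ∈ O, ψ ∈ S) :
    (fun v => {ψ | ψ ∈ O ∧ ev ψ v}) '' {v | E w v} =
    (fun t : List Bool => {ψ | ψ ∈ O ∧ ∃ (i : ℕ) (hi : i < S.length), S[i] = ψ ∧
      t.getD i false = true}) '' {t | t ∈ x} := by
  rw [h.qs] at hq
  have key : ∀ v t, ev (PropML.tp S t) v → {ψ | ψ ∈ O ∧ ev ψ v} =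
      {ψ | ψ ∈ O ∧ ∃ (i : ℕ) (hi : i < S.length), S[i] = ψ ∧ t.getD i false = true} := by
    intro v t ht
    rw [h.tp] at ht
    ext ψ
    simp only [Set.mem_ofPred_eq]
    refine and_congr_right fun hψ => ?_
    constructor
    · intro hv
      obtain ⟨i, hi, rfl⟩ := List.getElem_of_mem (hO ψ hψ)
      exact ⟨i, hi, rfl, (ht i hi).1 hv⟩
    · rintro ⟨i, hi, rfl, hti⟩
      exact (ht i hi).2 hti
  apply Set.Subset.antisymm
  · rintro _ ⟨v, hv, rfl⟩
    obtain ⟨t, ht, hvt⟩ := hq.2 v hv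
    exact ⟨t, ht, (key v t hvt).symm⟩
  · rintro _ ⟨t, ht, rfl⟩
    obtain ⟨v, hv, hvt⟩ := hq.1 t ht
    exact ⟨v, hv, key v t hvt⟩

end

theorem sub_self (φ : PF M) : φ ∈ sub φ := by cases φ <;> simp [sub]

theorem sub_neg {φ a : PF M} (h : PF.neg a ∈ sub φ) : a ∈ sub φ := by
  induction φ with
  | atom n => simp [sub] at h
  | neg b ih =>
    simp only [sub, List.mem_cons] at h ⊢
    rcases h with h | h
    · injection h with h; subst h; exact Or.inr (sub_self _)
    · exact Or.inr (ih h)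
  | and b c ih1 ih2 =>
    simp only [sub, List.mem_cons, List.mem_append] at h ⊢
    rcases h with h | h | h
    · cases h
    · exact Or.inr (Or.inl (ih1 h))
    · exact Or.inr (Or.inr (ih2 h))
  | box m b ih =>
    simp only [sub, List.mem_cons] at h ⊢
    rcases h with h | h
    · cases h
    · exact Or.inr (ih h)

theorem sub_and {φ a b : PF M} (h : PF.and a b ∈ sub φ) : a ∈ sub φ ∧ b ∈ sub φ := by
  induction φ with
  | atom n => simp [sub] at h
  | neg b ih =>
    simp only [sub, List.mem_cons] at h ⊢
    rcases h with h | h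
    · cases h
    · exact ⟨Or.inr (ih h).1, Or.inr (ih h).2⟩
  | and b c ih1 ih2 =>
    simp only [sub, List.mem_cons, List.mem_append] at h ⊢
    rcases h with h | h | h
    · injection h with h h'; subst h; subst h'
      exact ⟨Or.inr (Or.inl (sub_self _)), Or.inr (Or.inr (sub_self _))⟩
    · exact ⟨Or.inr (Or.inl (ih1 h).1), Or.inr (Or.inl (ih1 h).2)⟩
    · exact ⟨Or.inr (Or.inr (ih2 h).1), Or.inr (Or.inr (ih2 h).2)⟩
  | box m b ih =>
    simp only [sub, List.mem_cons] at h ⊢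
    rcases h with h | h
    · cases h
    · exact ⟨Or.inr (ih h).1, Or.inr (ih h).2⟩

theorem sub_box {φ a : PF M} {m : M} (h : PF.box m a ∈ sub φ) : a ∈ sub φ ∧ m ∈ ops φ := by
  induction φ with
  | atom n => simp [sub] at h
  | neg b ih =>
    simp only [sub, List.mem_cons] at h ⊢
    rcases h with h | h
    · cases h
    · exact ⟨Or.inr (ih h).1, (ih h).2⟩
  | and b c ih1 ih2 =>
    simp only [sub, ops, List.mem_cons, List.mem_append] at h ⊢
    rcases h with h | h | h
    · cases h
    · exact ⟨Or.inr (Or.inl (ih1 h).1), Or.inl (ih1 h).2⟩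
    · exact ⟨Or.inr (Or.inr (ih2 h).1), Or.inr (ih2 h).2⟩
  | box m' b ih =>
    simp only [sub, ops, List.mem_cons] at h ⊢
    rcases h with h | h
    · injection h with h h'; subst h; subst h'
      exact ⟨Or.inr (sub_self _), Or.inl rfl⟩
    · exact ⟨Or.inr (ih h).1, Or.inr (ih h).2⟩

theorem sub_len_pos (φ : PF M) : 0 < (sub φ).length := by cases φ <;> simp [sub]

/-! ### the two sides -/

variable {M1 M2 : Type}

def f1 : Option (M1 ⊕ M2) → Option (Option M1)
  | none => some none
  | some (Sum.inl m) => some (some m)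
  | some (Sum.inr _) => none

def f2 : Option (M1 ⊕ M2) → Option (Option M2)
  | none => some none
  | some (Sum.inl _) => none
  | some (Sum.inr m) => some (some m)

theorem labels_eq {M W1 W2 κ : Type} {e : M} {E1 : W1 → W1 → Prop} {E2 : W2 → W2 → Prop}
    {ev1 : PF M → W1 → Prop} {ev2 : PF M → W2 → Prop} (h1 : Ev e E1 ev1) (h2 : Ev e E2 ev2)
    (q1 : Equivalence E1) (q2 : Equivalence E2)
    (S : List (PF M)) (okk : κ → Set (PF M)) (hS : ∀ k, ∀ ψ ∈ okk k, ψ ∈ S)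
    (l1 : W1 → κ) (l2 : W2 → κ) (hE1 : ∀ w v, E1 w v → l1 w = l1 v)
    (hE2 : ∀ w v, E2 w v → l2 w = l2 v) (w : W1) (w' : W2) (hl : l1 w = l2 w')
    (hx : okk (l1 w) = ∅ ∨ ∃ x, ev1 (qs e S x) w ∧ ev2 (qs e S x) w') :
    (fun v => (okk (l1 v), {ψ | ψ ∈ okk (l1 v) ∧ ev1 ψ v})) '' {v | E1 w v} =
    (fun v => (okk (l2 v), {ψ | ψ ∈ okk (l2 v) ∧ ev2 ψ v})) '' {v | E2 w' v} := by
  have A1 : (fun v => (okk (l1 v), {ψ | ψ ∈ okk (l1 v) ∧ ev1 ψ v})) '' {v | E1 w v} =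
     (fun s => (okk (l1 w), s)) '' ((fun v => {ψ | ψ ∈ okk (l1 w) ∧ ev1 ψ v}) '' {v | E1 w v}) := by
    rw [Set.image_image]
    apply Set.image_congr
    intro v hv
    rw [hE1 w v hv]
  have A2 : (fun v => (okk (l2 v), {ψ | ψ ∈ okk (l2 v) ∧ ev2 ψ v})) '' {v | E2 w' v} =
     (fun s => (okk (l1 w), s)) '' ((fun v => {ψ | ψ ∈ okk (l1 w) ∧ ev2 ψ v}) '' {v | E2 w' v}) := by
    rw [Set.image_image]
    apply Set.image_congr
    intro v hv
    rw [hl, hE2 w' v hv]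
  rw [A1, A2]
  congr 1
  rcases hx with hx | ⟨x, hx1, hx2⟩
  · have B1 : {v | E1 w v}.Nonempty := ⟨w, q1.refl w⟩
    have B2 : {v | E2 w' v}.Nonempty := ⟨w', q2.refl w'⟩
    simp [hx, B1.image_const, B2.image_const]
  · rw [h1.qs_labels S x w hx1 _ (hS _), h2.qs_labels S x w' hx2 _ (hS _)]

theorem combine {κ : Type} {d : DSem} {L1 : Set (PF M1)} {L2 : Set (PF M2)}
    {B1 : KFrame (Option M1)} {B2 : KFrame (Option M2)} (h1 : FrameFor B1 (LS5 d L1))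
    (h2 : FrameFor B2 (LS5 d L2)) (V1 : ℕ → B1.W → Prop) (V2 : ℕ → B2.W → Prop)
    (c : PF (Option (M1 ⊕ M2)) → ℕ)
    (S : List (PF (Option (M1 ⊕ M2)))) (okk : κ → Set (PF (Option (M1 ⊕ M2))))
    (hS : ∀ k, ∀ ψ ∈ okk k, ψ ∈ S)
    (hneg : ∀ k a, PF.neg a ∈ okk k → a ∈ okk k)
    (hand : ∀ k a b, PF.and a b ∈ okk k → a ∈ okk k ∧ b ∈ okk k)
    (l1 : B1.W → κ) (l2 : B2.W → κ) (hE1 : ∀ w v, B1.R none w v → l1 w = l1 v)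
    (hE2 : ∀ w v, B2.R none w v → l2 w = l2 v)
    (hb1 : ∀ o w v ψ, PF.box (Option.map Sum.inl o) ψ ∈ okk (l1 w) → B1.R o w v → ψ ∈ okk (l1 v))
    (hb2 : ∀ o w v ψ, PF.box (Option.map Sum.inr o) ψ ∈ okk (l2 w) → B2.R o w v → ψ ∈ okk (l2 v))
    (m12 : ∀ w, ∃ w', l1 w = l2 w' ∧ (okk (l1 w) = ∅ ∨ ∃ x,
      PVal (F := B1) V1 (sur f1 c (qs none S x)) w ∧ PVal (F := B2) V2 (sur f2 c (qs none S x)) w'))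
    (m21 : ∀ w', ∃ w, l1 w = l2 w' ∧ (okk (l1 w) = ∅ ∨ ∃ x,
      PVal (F := B1) V1 (sur f1 c (qs none S x)) w ∧ PVal (F := B2) V2 (sur f2 c (qs none S x)) w')) :
    ∃ (G : KFrame (Option (M1 ⊕ M2))) (V : ℕ → G.W → Prop) (π1 : G.W → B1.W),
      FrameFor G (fusionE (LS5 d L1) (LS5 d L2)) ∧ Function.Surjective π1 ∧
      ∀ ψ g, ψ ∈ okk (l1 (π1 g)) → (PVal (F := G) V ψ g ↔ PVal (F := B1) V1 (sur f1 c ψ) (π1 g)) := by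
  have c1 := FC_of_frame h1
  have c2 := FC_of_frame h2
  have v1 := Ev.sur B1 V1 (none : Option (M1 ⊕ M2)) none f1 c rfl
  have v2 := Ev.sur B2 V2 (none : Option (M1 ⊕ M2)) none f2 c rfl
  obtain ⟨G, π1, π2, hG, b1, b2, hs, hτ⟩ := glue h1 h2
    (fun v => (okk (l1 v), {ψ | ψ ∈ okk (l1 v) ∧ PVal (F := B1) V1 (sur f1 c ψ) v}))
    (fun v => (okk (l2 v), {ψ | ψ ∈ okk (l2 v) ∧ PVal (F := B2) V2 (sur f2 c ψ) v}))
    (by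
      intro w
      obtain ⟨w', hl, hx⟩ := m12 w
      exact ⟨w', labels_eq v1 v2 c1.eqv c2.eqv S okk hS l1 l2 hE1 hE2 w w' hl hx⟩)
    (by
      intro w'
      obtain ⟨w, hl, hx⟩ := m21 w'
      exact ⟨w, (labels_eq v1 v2 c1.eqv c2.eqv S okk hS l1 l2 hE1 hE2 w w' hl hx).symm⟩)
  simp only [Prod.mk.injEq] at hτ
  have tr : ∀ g ψ, ψ ∈ okk (l1 (π1 g)) →
      (PVal (F := B1) V1 (sur f1 c ψ) (π1 g) ↔ PVal (F := B2) V2 (sur f2 c ψ) (π2 g)) := by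
    intro g ψ hψ
    have := congrArg (fun s => ψ ∈ s) (hτ g).2
    simp only [Set.mem_ofPred_eq, eq_iff_iff] at this
    have hψ' : ψ ∈ okk (l2 (π2 g)) := (hτ g).1 ▸ hψ
    tauto
  refine ⟨G, fun n g => V1 (c (.atom n)) (π1 g), π1, hG, hs, ?_⟩
  intro ψ
  induction ψ with
  | atom n => intro g _; exact Iff.rfl
  | neg a ih => intro g hg; exact not_congr (ih g (hneg _ _ hg))
  | and a b iha ihb => intro g hg; exact and_congr (iha g (hand _ _ _ hg).1) (ihb g (hand _ _ _ hg).2)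
  | box o a ih =>
    intro g hg
    have side1 : ∀ o', o = Option.map Sum.inl o' → f1 o = some o' →
        (PVal (F := G) (fun n g => V1 (c (.atom n)) (π1 g)) (PF.box o a) g ↔
        PVal (F := B1) V1 (sur f1 c (PF.box o a)) (π1 g)) := by
      rintro o' rfl hf
      simp only [sur, hf, PVal]
      constructor
      · intro hh v hv
        obtain ⟨g', hg', rfl⟩ := b1.back o' g v hv
        exact (ih g' (hb1 o' _ _ _ hg hv)).1 (hh g' hg')
      · intro hh g' hg'
        have hv := b1.forth o' g g' hg'
        exact (ih g' (hb1 o' _ _ _ hg hv)).2 (hh _ hv)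
    have side2 : ∀ o', o = Option.map Sum.inr o' → f2 o = some o' →
        (PVal (F := G) (fun n g => V1 (c (.atom n)) (π1 g)) (PF.box o a) g ↔
        PVal (F := B1) V1 (sur f1 c (PF.box o a)) (π1 g)) := by
      rintro o' rfl hf
      rw [tr g _ hg]
      have hg2 : PF.box (Option.map Sum.inr o') a ∈ okk (l2 (π2 g)) := (hτ g).1 ▸ hg
      simp only [sur, hf, PVal]
      constructor
      · intro hh v hv
        obtain ⟨g', hg', rfl⟩ := b2.back o' g v hv
        have ha2 := hb2 o' _ _ _ hg2 hv
        have ha1 : a ∈ okk (l1 (π1 g')) := (hτ g').1 ▸ ha2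
        exact (tr g' a ha1).1 ((ih g' ha1).1 (hh g' hg'))
      · intro hh g' hg'
        have hv := b2.forth o' g g' hg'
        have ha2 := hb2 o' _ _ _ hg2 hv
        have ha1 : a ∈ okk (l1 (π1 g')) := (hτ g').1 ▸ ha2
        exact (ih g' ha1).2 ((tr g' a ha1).2 (hh _ hv))
    rcases o with _ | m | m
    · exact side1 none rfl rfl
    · exact side1 (some m) rfl rfl
    · exact side2 (some m) rfl rfl

end



theorem sigF_val {M I : Type} (hI : Nonempty I) (F : I → KFrame M)
    (V : ∀ i, ℕ → (F i).W → Prop) (φ : PF M) (i : I) (w : (F i).W) :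
    PVal (F := sigF hI F) (fun n p => V p.1 n p.2) φ ⟨i, w⟩ ↔ PVal (F := F i) (V i) φ w :=
  ((sigF_BM hI F i).val (fun n p => V p.1 n p.2) φ w).symm

theorem sigF_R {M I : Type} (hI : Nonempty I) (F : I → KFrame M) (m : M)
    (p q : (sigF hI F).W) (h : (sigF hI F).R m p q) : p.1 = q.1 := h.1

def okL {M : Type} (S : List (PF M)) (k : ℕ) : Set (PF M) := {ψ | ψ ∈ S ∧ (sub ψ).length ≤ k}

/-- one side of the local construction -/
theorem sideL {M M' : Type} {d : DSem} {L : Set (PF M')}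
    (f : Option M → Option (Option M')) (ι : Option M' → Option M) (hf : ∀ o, f (ι o) = some o)
    (hn : ι none = none)
    (hcon : PF.bot ∉ LS5 d L) (hK : KComplete (LS5 d L)) (c : PF (Option M) → ℕ)
    (S : List (PF (Option M))) (os : List (Option M)) (xs : List (List (List Bool)))
    (hS : ∀ o a, PF.box o a ∈ S → a ∈ S ∧ o ∈ os) (N : ℕ) :
    ∃ (B : KFrame (Option M')) (V : ℕ → B.W → Prop) (l : B.W → ℕ),
      FrameFor B (LS5 d L) ∧ (∀ w, l w ≤ N) ∧ (∀ w v, B.R none w v → l w = l v) ∧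
      (∀ o w v ψ, PF.box (ι o) ψ ∈ okL S (l w) → B.R o w v → ψ ∈ okL S (l v)) ∧
      (∀ w k, l w = k + 1 → ∃ x ∈ xs, PVal (F := B) V (sur f c (qs none S x)) w) ∧
      (∀ k ≤ N, ∀ θ, PF.imp (sur f c (AA none S os xs k)) θ ∉ LS5 d L →
        ∃ w, l w = k ∧ ¬ PVal (F := B) V θ w) := by
  classical
  let A := fun k => sur f c (AA none S os xs k)
  let I := {p : ℕ × PF (Option M') // p.1 ≤ N ∧ PF.imp (A p.1) p.2 ∉ LS5 d L}
  have hlog := isPLogic_LS5 d L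
  have hfn : f none = some none := by rw [← hn]; exact hf none
  have hI : Nonempty I := by
    refine ⟨⟨(0, PF.bot), Nat.zero_le _, fun hh => hcon (hlog.mp _ _ hh (hlog.taut _ ?_))⟩⟩
    intro v
    simp [A, AA, sur, top, PF.bot, tautEval]
  have hex : ∀ i : I, ∃ (F : KFrame (Option M')) (V : ℕ → F.W → Prop) (w : F.W),
      FrameFor F (LS5 d L) ∧ PVal (F := F) V (A i.1.1) w ∧ ¬ PVal (F := F) V i.1.2 w := by
    intro i
    have := mt (hK _) i.2.2
    simp only [PValid, PVal_imp, not_forall] at this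
    obtain ⟨F, hF, V, w, h1, h2⟩ := this
    exact ⟨F, V, w, hF, h1, h2⟩
  choose F V r hF hA hθ using hex
  let B := sigF hI F
  let W : ℕ → B.W → Prop := fun n p => V p.1 n p.2
  have hB : FrameFor B (LS5 d L) := sigF_frame hI F hF
  have cB := FC_of_frame hB
  have ev := Ev.sur B W (none : Option M) none f c hfn
  let P : B.W → ℕ → Prop := fun w k => PVal (F := B) W (A k) w
  let l : B.W → ℕ := fun w => Nat.findGreatest (P w) w.1.1.1
  have P0 : ∀ w, P w 0 := fun w => ev.top w
  have Pl : ∀ w, P w (l w) := fun w => Nat.findGreatest_spec (P := P w) (Nat.zero_le _) (P0 w)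
  refine ⟨B, W, l, hB, ?_, ?_, ?_, ?_, ?_⟩
  · intro w
    exact (Nat.findGreatest_le _).trans w.1.2.1
  · intro w v hwv
    have h1 : w.1 = v.1 := sigF_R hI F _ w v hwv
    have h2 : P w = P v := by
      funext k
      exact propext (ev.AA_E cB.eqv S os xs k hwv)
    simp only [l, h1, h2]
  · rintro o w v ψ ⟨h1, h2⟩ hwv
    obtain ⟨h3, h4⟩ := hS _ _ h1
    refine ⟨h3, ?_⟩
    have h5 : w.1 = v.1 := sigF_R hI F _ w v hwv
    simp only [sub, List.length_cons] at h2
    obtain ⟨k, hk⟩ : ∃ k, l w = k + 1 := ⟨l w - 1, by omega⟩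
    have h6 : P w (k + 1) := hk ▸ Pl w
    have h7 := ((ev.AA_succ S os xs k w).1 h6 w (cB.eqv.refl w)).2 _ h4
    simp only [sur, hf, PVal] at h7
    have h8 : P v k := h7 v hwv
    have h9 : k ≤ l v := Nat.le_findGreatest (by
      have : l w ≤ w.1.1.1 := Nat.findGreatest_le _
      rw [← h5]; omega) h8
    omega
  · intro w k hk
    have h6 : P w (k + 1) := hk ▸ Pl w
    exact (ev.chi S xs w).1 ((ev.AA_succ S os xs k w).1 h6 w (cB.eqv.refl w)).1
  · intro k hk θ hθ'
    let i : I := ⟨(k, θ), hk, hθ'⟩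
    refine ⟨⟨i, r i⟩, ?_, ?_⟩
    · apply le_antisymm
      · exact Nat.findGreatest_le (P := P ⟨i, r i⟩) k
      · exact Nat.le_findGreatest le_rfl ((sigF_val hI F V _ i (r i)).2 (hA i))
    · exact fun hh => hθ i ((sigF_val hI F V _ i (r i)).1 hh)

section
variable {M1 M2 : Type} {d : DSem} {L1 : Set (PF M1)} {L2 : Set (PF M2)}

def certL (c : PF (Option (M1 ⊕ M2)) → ℕ) (K1 : Set (PF (Option M1))) (K2 : Set (PF (Option M2)))
    (φ : PF (Option (M1 ⊕ M2))) (xs : List (List (List Bool))) : Prop :=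
  (∀ n < (sub φ).length, ∀ x ∈ xs,
    sur f1 c (PF.imp (AA none (sub φ) (ops φ) xs (n + 1)) (PF.neg (qs none (sub φ) x))) ∉ K1 ∧
    sur f2 c (PF.imp (AA none (sub φ) (ops φ) xs (n + 1)) (PF.neg (qs none (sub φ) x))) ∉ K2) ∧
  sur f1 c (PF.imp (AA none (sub φ) (ops φ) xs (sub φ).length) φ) ∉ K1

theorem sur_imp {M M' : Type} (f : M → Option M') (c : PF M → ℕ) (a b : PF M) :
    sur f c (PF.imp a b) = PF.imp (sur f c a) (sur f c b) := rfl

theorem certL_sound (hc1 : PF.bot ∉ LS5 d L1) (hc2 : PF.bot ∉ LS5 d L2)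
    (hK1 : KComplete (LS5 d L1)) (hK2 : KComplete (LS5 d L2)) (c : PF (Option (M1 ⊕ M2)) → ℕ)
    (φ : PF (Option (M1 ⊕ M2))) (xs : List (List (List Bool)))
    (h : certL c (LS5 d L1) (LS5 d L2) φ xs) :
    ∃ (G : KFrame (Option (M1 ⊕ M2))) (V : ℕ → G.W → Prop) (g : G.W),
      FrameFor G (fusionE (LS5 d L1) (LS5 d L2)) ∧ ¬ PVal (F := G) V φ g := by
  obtain ⟨hx, h0⟩ := h
  have hS : ∀ o a, PF.box o a ∈ sub φ → a ∈ sub φ ∧ o ∈ ops φ := fun o a => sub_box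
  obtain ⟨B1, V1, l1, a1, b1, e1, g1, q1, r1⟩ := sideL (f1 (M1 := M1) (M2 := M2))
    (Option.map Sum.inl) (by rintro (_ | m) <;> rfl) rfl hc1 hK1 c (sub φ) (ops φ) xs hS
    (sub φ).length
  obtain ⟨B2, V2, l2, a2, b2, e2, g2, q2, r2⟩ := sideL (f2 (M1 := M1) (M2 := M2))
    (Option.map Sum.inr) (by rintro (_ | m) <;> rfl) rfl hc2 hK2 c (sub φ) (ops φ) xs hS
    (sub φ).length
  have ok0 : okL (sub φ) 0 = ∅ := by
    ext ψ
    simp only [okL, Set.mem_ofPred_eq, Set.mem_empty_iff_false, iff_false]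
    intro h
    have := sub_len_pos ψ
    omega
  have z1 := isPLogic_LS5 d L1
  have z2 := isPLogic_LS5 d L2
  obtain ⟨G, V, π1, hG, hs, ht⟩ := combine a1 a2 V1 V2 c (sub φ) (okL (sub φ))
    (fun k ψ h => h.1)
    (fun k a h => ⟨sub_neg h.1, by have := h.2; simp only [sub, List.length_cons] at this; omega⟩)
    (fun k a b h => ⟨⟨(sub_and h.1).1, by
        have := h.2; simp only [sub, List.length_cons, List.length_append] at this; omega⟩,
      ⟨(sub_and h.1).2, by
        have := h.2; simp only [sub, List.length_cons, List.length_append] at this; omega⟩⟩)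
    l1 l2 e1 e2 g1 g2
    (by
      intro w
      rcases hw : l1 w with _ | k
      · obtain ⟨w', hw', -⟩ := r2 0 (Nat.zero_le _) PF.bot (fun hh => hc2 (z2.mp _ _ hh (z2.taut _ (by
          intro v; simp [AA, sur, top, PF.bot, tautEval]))))
        exact ⟨w', hw'.symm, Or.inl ok0⟩
      · obtain ⟨x, hxx, hv⟩ := q1 w k hw
        have hkN : k + 1 ≤ (sub φ).length := hw ▸ b1 w
        obtain ⟨w', hw', hv'⟩ := r2 (k + 1) hkN _ ((hx k (by omega) x hxx).2)
        exact ⟨w', hw'.symm, Or.inr ⟨x, hv, not_not.1 hv'⟩⟩)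
    (by
      intro w
      rcases hw : l2 w with _ | k
      · obtain ⟨w', hw', -⟩ := r1 0 (Nat.zero_le _) PF.bot (fun hh => hc1 (z1.mp _ _ hh (z1.taut _ (by
          intro v; simp [AA, sur, top, PF.bot, tautEval]))))
        exact ⟨w', hw', Or.inl (hw' ▸ ok0)⟩
      · obtain ⟨x, hxx, hv⟩ := q2 w k hw
        have hkN : k + 1 ≤ (sub φ).length := hw ▸ b2 w
        obtain ⟨w', hw', hv'⟩ := r1 (k + 1) hkN _ ((hx k (by omega) x hxx).1)
        exact ⟨w', hw', Or.inr ⟨x, not_not.1 hv', hv⟩⟩)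
  obtain ⟨w, hw, hv⟩ := r1 _ le_rfl _ h0
  obtain ⟨g, rfl⟩ := hs w
  refine ⟨G, V, g, hG, fun hh => hv ((ht φ g ⟨sub_self φ, ?_⟩).1 hh)⟩
  rw [hw]

/-! global version -/

theorem sideG {M' M : Type} {L : Set (PF M')}
    (f : Option M → Option (Option M'))
    (hK : GloballyKComplete (LS5 d L)) (c : PF (Option M) → ℕ)
    (α : PF (Option M)) (ψ : PF (Option M')) (hψ : ¬ PGlobal (LS5 d L) (sur f c α) ψ) :
    ∃ (B : KFrame (Option M')) (V : ℕ → B.W → Prop),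
      FrameFor B (LS5 d L) ∧ (∀ w, PVal (F := B) V (sur f c α) w) ∧
      (∀ θ, ¬ PGlobal (LS5 d L) (sur f c α) θ → ∃ w, ¬ PVal (F := B) V θ w) := by
  let I := {θ : PF (Option M') // ¬ PGlobal (LS5 d L) (sur f c α) θ}
  have hI : Nonempty I := ⟨⟨ψ, hψ⟩⟩
  have hex : ∀ i : I, ∃ (F : KFrame (Option M')) (V : ℕ → F.W → Prop) (w : F.W),
      FrameFor F (LS5 d L) ∧ (∀ w, PVal (F := F) V (sur f c α) w) ∧ ¬ PVal (F := F) V i.1 w := by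
    intro i
    have := mt (hK _ _).2 i.2
    simp only [not_forall] at this
    obtain ⟨F, hF, V, h1, w, h2⟩ := this
    exact ⟨F, V, w, hF, h1, h2⟩
  choose F V r hF hA hθ using hex
  refine ⟨sigF hI F, fun n p => V p.1 n p.2, sigF_frame hI F hF, ?_, ?_⟩
  · rintro ⟨i, w⟩
    exact (sigF_val hI F V _ i w).2 (hA i w)
  · intro θ h
    exact ⟨⟨⟨θ, h⟩, r ⟨θ, h⟩⟩, fun hh => hθ ⟨θ, h⟩ ((sigF_val hI F V _ _ _).1 hh)⟩

def PiG {M : Type} (e : M) (φ ψ : PF M) (xs : List (List (List Bool))) : PF M :=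
  PF.and (chi e (sub φ ++ sub ψ) xs) φ

def certG (c : PF (Option (M1 ⊕ M2)) → ℕ) (K1 : Set (PF (Option M1))) (K2 : Set (PF (Option M2)))
    (φ ψ : PF (Option (M1 ⊕ M2))) (xs : List (List (List Bool))) : Prop :=
  (∀ x ∈ xs,
    ¬ PGlobal K1 (sur f1 c (PiG none φ ψ xs)) (sur f1 c (PF.neg (qs none (sub φ ++ sub ψ) x))) ∧
    ¬ PGlobal K2 (sur f2 c (PiG none φ ψ xs)) (sur f2 c (PF.neg (qs none (sub φ ++ sub ψ) x)))) ∧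
  ¬ PGlobal K1 (sur f1 c (PiG none φ ψ xs)) (sur f1 c ψ)

theorem certG_sound
    (hK1 : GloballyKComplete (LS5 d L1)) (hK2 : GloballyKComplete (LS5 d L2))
    (c : PF (Option (M1 ⊕ M2)) → ℕ)
    (φ ψ : PF (Option (M1 ⊕ M2))) (xs : List (List (List Bool)))
    (h : certG c (LS5 d L1) (LS5 d L2) φ ψ xs) :
    ∃ (G : KFrame (Option (M1 ⊕ M2))) (V : ℕ → G.W → Prop) (g : G.W),
      FrameFor G (fusionE (LS5 d L1) (LS5 d L2)) ∧ (∀ g, PVal (F := G) V φ g) ∧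
      ¬ PVal (F := G) V ψ g := by
  obtain ⟨hx, h0⟩ := h
  obtain ⟨B1, V1, a1, b1, r1⟩ := sideG (f1 (M1 := M1) (M2 := M2)) hK1 c _ _ h0
  obtain ⟨w1, -⟩ := r1 _ h0
  have ev1 := Ev.sur B1 V1 (none : Option (M1 ⊕ M2)) none f1 c rfl
  have k1 : ∀ w, ∃ x ∈ xs, PVal (F := B1) V1 (sur f1 c (qs none (sub φ ++ sub ψ) x)) w :=
    fun w => (ev1.chi _ xs w).1 (b1 w).1
  obtain ⟨x1, hx1, -⟩ := k1 w1
  obtain ⟨B2, V2, a2, b2, r2⟩ := sideG (f2 (M1 := M1) (M2 := M2)) hK2 c _ _ (hx x1 hx1).2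
  have ev2 := Ev.sur B2 V2 (none : Option (M1 ⊕ M2)) none f2 c rfl
  have k2 : ∀ w, ∃ x ∈ xs, PVal (F := B2) V2 (sur f2 c (qs none (sub φ ++ sub ψ) x)) w :=
    fun w => (ev2.chi _ xs w).1 (b2 w).1
  obtain ⟨G, V, π1, hG, hs, ht⟩ := combine (κ := Unit) a1 a2 V1 V2 c (sub φ ++ sub ψ)
    (fun _ => {θ | θ ∈ sub φ ++ sub ψ})
    (fun k ψ h => h)
    (fun k a h => by
      simp only [Set.mem_ofPred_eq, List.mem_append] at h ⊢
      exact h.imp sub_neg sub_neg)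
    (fun k a b h => by
      simp only [Set.mem_ofPred_eq, List.mem_append] at h ⊢
      rcases h with h | h
      · exact ⟨Or.inl (sub_and h).1, Or.inl (sub_and h).2⟩
      · exact ⟨Or.inr (sub_and h).1, Or.inr (sub_and h).2⟩)
    (fun _ => ()) (fun _ => ()) (fun _ _ _ => rfl) (fun _ _ _ => rfl)
    (fun o w v a h _ => by
      simp only [Set.mem_ofPred_eq, List.mem_append] at h ⊢
      exact h.imp (fun h => (sub_box h).1) (fun h => (sub_box h).1))
    (fun o w v a h _ => by
      simp only [Set.mem_ofPred_eq, List.mem_append] at h ⊢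
      exact h.imp (fun h => (sub_box h).1) (fun h => (sub_box h).1))
    (by
      intro w
      obtain ⟨x, hxx, hv⟩ := k1 w
      obtain ⟨w', hv'⟩ := r2 _ (hx x hxx).2
      exact ⟨w', rfl, Or.inr ⟨x, hv, not_not.1 hv'⟩⟩)
    (by
      intro w
      obtain ⟨x, hxx, hv⟩ := k2 w
      obtain ⟨w', hv'⟩ := r1 _ (hx x hxx).1
      exact ⟨w', rfl, Or.inr ⟨x, not_not.1 hv', hv⟩⟩)
  obtain ⟨w, hv⟩ := r1 _ h0
  obtain ⟨g, rfl⟩ := hs w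
  refine ⟨G, V, g, hG, fun g => (ht φ g ?_).2 (b1 _).2, fun hh => hv ((ht ψ g ?_).1 hh)⟩
  · exact List.mem_append_left _ (sub_self φ)
  · exact List.mem_append_right _ (sub_self ψ)

end



theorem unsur {M M' : Type} (f : M → Option M') (ι : M' → M) (hι : ∀ o o', f o = some o' → ι o' = o)
    (c : PF M → ℕ) (σ : ℕ → PF M) (hσ : ∀ ψ, σ (c ψ) = ψ) (φ : PF M) :
    PF.substP σ (PF.mapOp ι (sur f c φ)) = φ := by
  induction φ with
  | atom n => exact hσ _
  | neg a ih => simp only [sur, PF.mapOp, PF.substP, ih]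
  | and a b iha ihb => simp only [sur, PF.mapOp, PF.substP, iha, ihb]
  | box o a ih =>
    rcases h : f o with _ | o'
    · simp only [sur, h, PF.mapOp, PF.substP, hσ]
    · simp only [sur, h, PF.mapOp, PF.substP, ih, hι o o' h]

theorem exists_unc {M : Type} {c : PF M → ℕ} (hc : Function.Injective c) :
    ∃ σ : ℕ → PF M, ∀ ψ, σ (c ψ) = ψ :=
  have : Nonempty (PF M) := ⟨.atom 0⟩
  ⟨Function.invFun c, Function.leftInverse_invFun hc⟩

theorem PGlobal.trans {M : Type} {L : Set (PF M)} {a b c : PF M} (h1 : PGlobal L a b)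
    (h2 : PGlobal L b c) : PGlobal L a c := by
  induction h2 with
  | ax h => exact .ax h
  | prem => exact h1
  | mp _ _ i1 i2 => exact .mp i1 i2
  | nec m _ i => exact .nec m i

theorem PGlobal.tr {M M' : Type} {L : Set (PF M)} {L' : Set (PF M')} (s : PF M → PF M')
    (hL : ∀ φ ∈ L, s φ ∈ L') (himp : ∀ a b, s (PF.imp a b) = PF.imp (s a) (s b))
    (g : M → M') (hbox : ∀ m a, s (PF.box m a) = PF.box (g m) (s a)) {a b : PF M}
    (h : PGlobal L a b) : PGlobal L' (s a) (s b) := by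
  induction h with
  | ax h => exact .ax (hL _ h)
  | prem => exact .prem
  | mp _ _ i1 i2 => exact .mp (himp _ _ ▸ i1) i2
  | nec m _ i => exact hbox m _ ▸ .nec (g m) i

theorem PGlobal.sound {M : Type} {L : Set (PF M)} {a b : PF M} (h : PGlobal L a b)
    (F : KFrame M) (hF : FrameFor F L) (V : ℕ → F.W → Prop) (ha : ∀ w, PVal (F := F) V a w) :
    ∀ w, PVal (F := F) V b w := by
  induction h with
  | ax h => exact hF _ h V
  | prem => exact ha
  | mp _ _ i1 i2 => exact fun w => (PVal_imp F V w _ _).1 (i1 w) (i2 w)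
  | nec m _ i => exact fun w v _ => i v

theorem PGlobal.top {M : Type} {L : Set (PF M)} (hL : IsPLogic L) {b : PF M}
    (h : PGlobal L top b) : b ∈ L := by
  induction h with
  | ax h => exact h
  | prem => exact hL.taut _ (by intro v; simp [PropML.top, PF.bot, tautEval])
  | mp _ _ i1 i2 => exact hL.mp _ _ i1 i2
  | nec m _ i => exact hL.nec m _ i

theorem top_true {M : Type} (F : KFrame M) (V : ℕ → F.W → Prop) (w : F.W) :
    PVal (F := F) V top w := by simp [top, PF.bot, PVal]

theorem GK_K {M : Type} {L : Set (PF M)} (hL : IsPLogic L) (h : GloballyKComplete L) :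
    KComplete L := by
  intro φ hφ
  exact PGlobal.top hL ((h top φ).2 fun F hF V _ w => hφ F hF V w)

def sl {α : Type} (l : List α) : List (List α) :=
  l.foldr (fun a r => r ++ r.map (fun t => a :: t)) [[]]

def allB : ℕ → List (List Bool)
  | 0 => [[]]
  | n + 1 => (allB n).map (fun t => true :: t) ++ (allB n).map (fun t => false :: t)

theorem filter_sl {α : Type} (p : α → Bool) (l : List α) : l.filter p ∈ sl l := by
  induction l with
  | nil => simp [sl]
  | cons a l ih =>
    have : sl (a :: l) = sl l ++ (sl l).map (fun t => a :: t) := rfl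
    rw [this, List.filter_cons]
    split_ifs
    · exact List.mem_append_right _ (List.mem_map.2 ⟨_, ih, rfl⟩)
    · exact List.mem_append_left _ ih

theorem mem_allB (t : List Bool) (n : ℕ) (h : t.length = n) : t ∈ allB n := by
  induction t generalizing n with
  | nil => subst h; simp [allB]
  | cons b t ih =>
    subst h
    have := ih t.length rfl
    cases b <;> simp [allB, this]

theorem chi_mem {M : Type} {Θ : Set (PF M)} (hΘ : NTh Θ) (e : M) (S : List (PF M)) :
    ∃ xs ∈ sl (sl (allB S.length)), (∀ x ∈ xs, PF.neg (qs e S x) ∉ Θ) ∧ chi e S xs ∈ Θ := by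
  classical
  let all : List (List Bool) := allB S.length
  have hall : ∀ t : List Bool, t.length = S.length → t ∈ all := fun t h => mem_allB t _ h
  refine ⟨(sl all).filter fun x => PF.neg (qs e S x) ∉ Θ, filter_sl _ _, ?_, ?_⟩
  · intro x hx
    simpa using (List.mem_filter.1 hx).2
  · apply hΘ.sem
    intro F V hV w
    have ev := Ev.val F V e
    rw [ev.chi]
    refine ⟨all.filter fun t => ∃ v, F.R e w v ∧ PVal (F := F) V (tp S t) v, ?_, ?_⟩
    · rw [List.mem_filter]
      refine ⟨filter_sl _ _, ?_⟩
      rw [decide_eq_true_eq]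
      intro hcon
      refine hV _ hcon w ?_
      rw [ev.qs]
      refine ⟨?_, ?_⟩
      · intro t ht
        simpa using (List.mem_filter.1 ht).2
      · intro v hv
        have : PVal (F := F) V (tp S (S.map fun ψ => decide (PVal (F := F) V ψ v))) v := by
          rw [ev.tp]
          intro i hi
          simp [List.getD, hi]
        refine ⟨_, List.mem_filter.2 ⟨hall _ (by simp), ?_⟩, this⟩
        rw [decide_eq_true_eq]
        exact ⟨v, hv, this⟩
    · rw [ev.qs]
      refine ⟨?_, ?_⟩
      · intro t ht
        simpa using (List.mem_filter.1 ht).2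
      · intro v hv
        have : PVal (F := F) V (tp S (S.map fun ψ => decide (PVal (F := F) V ψ v))) v := by
          rw [ev.tp]
          intro i hi
          simp [List.getD, hi]
        refine ⟨_, List.mem_filter.2 ⟨hall _ (by simp), ?_⟩, this⟩
        rw [decide_eq_true_eq]
        exact ⟨v, hv, this⟩

theorem AA_mem {M : Type} {Θ : Set (PF M)} (hΘ : NTh Θ) (e : M) (S : List (PF M)) (os : List M)
    (xs : List (List (List Bool))) (h : chi e S xs ∈ Θ) (n : ℕ) : AA e S os xs n ∈ Θ := by
  induction n with
  | zero => exact hΘ.taut _ (by intro v; simp [AA, PropML.top, PF.bot, tautEval])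
  | succ n ih =>
    apply hΘ.sem
    intro F V hV w
    rw [(Ev.val F V e).AA_succ]
    exact fun v _ => ⟨hV _ h v, fun m _ => hV _ (hΘ.nec m _ ih) v⟩

section
variable {M1 M2 : Type} {d : DSem} {L1 : Set (PF M1)} {L2 : Set (PF M2)}
variable {K1 : Set (PF (Option M1))} {K2 : Set (PF (Option M2))}

theorem fus1 {φ : PF (Option M1)} (h : φ ∈ K1) :
    PF.mapOp (Option.map Sum.inl) φ ∈ fusionE K1 K2 := fun L hL => hL.2.1 ⟨φ, h, rfl⟩

theorem fus2 {φ : PF (Option M2)} (h : φ ∈ K2) :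
    PF.mapOp (Option.map Sum.inr) φ ∈ fusionE K1 K2 := fun L hL => hL.2.2 ⟨φ, h, rfl⟩

theorem hι1 : ∀ (o : Option (M1 ⊕ M2)) o', f1 o = some o' → Option.map Sum.inl o' = o := by
  rintro (_ | m | m) o' h <;> simp [f1] at h <;> subst h <;> rfl

theorem hι2 : ∀ (o : Option (M1 ⊕ M2)) o', f2 o = some o' → Option.map Sum.inr o' = o := by
  rintro (_ | m | m) o' h <;> simp [f2] at h <;> subst h <;> rfl

theorem unsur1 {c : PF (Option (M1 ⊕ M2)) → ℕ} (hc : Function.Injective c)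
    {θ : PF (Option (M1 ⊕ M2))} (h : sur f1 c θ ∈ K1) : θ ∈ fusionE K1 K2 := by
  obtain ⟨σ, hσ⟩ := exists_unc hc
  have := (isPLogic_fusion K1 K2).subst σ _ (fus1 (K2 := K2) h)
  rwa [unsur _ _ hι1 c σ hσ] at this

theorem unsur2 {c : PF (Option (M1 ⊕ M2)) → ℕ} (hc : Function.Injective c)
    {θ : PF (Option (M1 ⊕ M2))} (h : sur f2 c θ ∈ K2) : θ ∈ fusionE K1 K2 := by
  obtain ⟨σ, hσ⟩ := exists_unc hc
  have := (isPLogic_fusion K1 K2).subst σ _ (fus2 (K1 := K1) h)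
  rwa [unsur _ _ hι2 c σ hσ] at this

theorem unsurG1 {c : PF (Option (M1 ⊕ M2)) → ℕ} (hc : Function.Injective c)
    {a b : PF (Option (M1 ⊕ M2))} (h : PGlobal K1 (sur f1 c a) (sur f1 c b)) :
    PGlobal (fusionE K1 K2) a b := by
  obtain ⟨σ, hσ⟩ := exists_unc hc
  have := PGlobal.tr (L' := fusionE K1 K2)
    (fun φ => PF.substP σ (PF.mapOp (Option.map Sum.inl) φ))
    (fun φ hφ => (isPLogic_fusion K1 K2).subst σ _ (fus1 hφ)) (fun _ _ => rfl)
    (Option.map Sum.inl) (fun _ _ => rfl) h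
  simpa only [unsur _ _ hι1 c σ hσ] using this

theorem unsurG2 {c : PF (Option (M1 ⊕ M2)) → ℕ} (hc : Function.Injective c)
    {a b : PF (Option (M1 ⊕ M2))} (h : PGlobal K2 (sur f2 c a) (sur f2 c b)) :
    PGlobal (fusionE K1 K2) a b := by
  obtain ⟨σ, hσ⟩ := exists_unc hc
  have := PGlobal.tr (L' := fusionE K1 K2)
    (fun φ => PF.substP σ (PF.mapOp (Option.map Sum.inr) φ))
    (fun φ hφ => (isPLogic_fusion K1 K2).subst σ _ (fus2 hφ)) (fun _ _ => rfl)
    (Option.map Sum.inr) (fun _ _ => rfl) h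
  simpa only [unsur _ _ hι2 c σ hσ] using this

theorem certL_exists {c : PF (Option (M1 ⊕ M2)) → ℕ} (hc : Function.Injective c)
    {φ : PF (Option (M1 ⊕ M2))} (h : φ ∉ fusionE K1 K2) : ∃ xs ∈ sl (sl (allB (sub φ).length)), certL c K1 K2 φ xs := by
  have hΘ := (isPLogic_fusion K1 K2).nth
  obtain ⟨xs, hxs, hx, hchi⟩ := chi_mem hΘ none (sub φ)
  have hA := AA_mem hΘ none (sub φ) (ops φ) xs hchi
  refine ⟨xs, hxs, fun n _ x hxx => ⟨fun hh => ?_, fun hh => ?_⟩, fun hh => ?_⟩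
  · exact hx x hxx (hΘ.mp _ _ (unsur1 hc hh) (hA _))
  · exact hx x hxx (hΘ.mp _ _ (unsur2 hc hh) (hA _))
  · exact h (hΘ.mp _ _ (unsur1 hc hh) (hA _))

theorem certG_exists {c : PF (Option (M1 ⊕ M2)) → ℕ} (hc : Function.Injective c)
    {φ ψ : PF (Option (M1 ⊕ M2))} (h : ¬ PGlobal (fusionE K1 K2) φ ψ) :
    ∃ xs ∈ sl (sl (allB (sub φ ++ sub ψ).length)), certG c K1 K2 φ ψ xs := by
  have hΘ := (isPLogic_fusion K1 K2).nth.glob φ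
  obtain ⟨xs, hxs, hx, hchi⟩ := chi_mem hΘ none (sub φ ++ sub ψ)
  have hA : PGlobal (fusionE K1 K2) φ (PiG none φ ψ xs) := by
    apply hΘ.sem
    intro F V hV w
    exact ⟨hV _ hchi w, hV φ .prem w⟩
  refine ⟨xs, hxs, fun x hxx => ⟨fun hh => ?_, fun hh => ?_⟩, fun hh => ?_⟩
  · exact hx x hxx (hA.trans (unsurG1 hc hh))
  · exact hx x hxx (hA.trans (unsurG2 hc hh))
  · exact h (hA.trans (unsurG1 hc hh))

theorem exists_frame {M : Type} {L : Set (PF M)} (hK : KComplete L) (hc : PF.bot ∉ L) :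
    ∃ F : KFrame M, FrameFor F L := by
  have := mt (hK _) hc
  simp only [not_forall] at this
  obtain ⟨F, hF, _⟩ := this
  exact ⟨F, hF⟩

section
variable (hc1 : PF.bot ∉ LS5 d L1) (hc2 : PF.bot ∉ LS5 d L2)
  (hK1 : KComplete (LS5 d L1)) (hK2 : KComplete (LS5 d L2))
include hc1 hc2 hK1 hK2

theorem certL_iff {c : PF (Option (M1 ⊕ M2)) → ℕ} (hc : Function.Injective c)
    (φ : PF (Option (M1 ⊕ M2))) :
    φ ∉ fusionE (LS5 d L1) (LS5 d L2) ↔ ∃ xs ∈ sl (sl (allB (sub φ).length)), certL c (LS5 d L1) (LS5 d L2) φ xs := by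
  refine ⟨certL_exists hc, ?_⟩
  rintro ⟨xs, -, h⟩ hφ
  obtain ⟨G, V, g, hG, hv⟩ := certL_sound hc1 hc2 hK1 hK2 c φ xs h
  exact hv (hG φ hφ V g)

theorem fusion_K {c : PF (Option (M1 ⊕ M2)) → ℕ} (hc : Function.Injective c) :
    KComplete (fusionE (LS5 d L1) (LS5 d L2)) := by
  intro φ hφ
  by_contra hcon
  obtain ⟨xs, -, h⟩ := certL_exists hc hcon
  obtain ⟨G, V, g, hG, hv⟩ := certL_sound hc1 hc2 hK1 hK2 c φ xs h
  exact hv (hφ G hG V g)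

end

theorem cons1 (hc2 : PF.bot ∉ LS5 d L2) (hK1 : KComplete (LS5 d L1)) (hK2 : KComplete (LS5 d L2)) (φ : PF (Option M1)) :
    PF.mapOp (Option.map Sum.inl) φ ∈ fusionE (LS5 d L1) (LS5 d L2) ↔ φ ∈ LS5 d L1 := by
  refine ⟨fun h => ?_, fus1⟩
  apply hK1
  intro F1 hF1 V w
  obtain ⟨F2, hF2⟩ := exists_frame hK2 hc2
  obtain ⟨G, hG, ⟨p, hp, hs⟩, -⟩ := prod_fusion hF1 hF2
  obtain ⟨g, rfl⟩ := hs w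
  refine (hp.val V φ g).1 ?_
  exact (PVal_mapOp G _ _ φ g).1 (hG _ h _ g)

theorem cons2 (hc1 : PF.bot ∉ LS5 d L1) (hK1 : KComplete (LS5 d L1)) (hK2 : KComplete (LS5 d L2)) (φ : PF (Option M2)) :
    PF.mapOp (Option.map Sum.inr) φ ∈ fusionE (LS5 d L1) (LS5 d L2) ↔ φ ∈ LS5 d L2 := by
  refine ⟨fun h => ?_, fus2⟩
  apply hK2
  intro F2 hF2 V w
  obtain ⟨F1, hF1⟩ := exists_frame hK1 hc1
  obtain ⟨G, hG, -, ⟨p, hp, hs⟩⟩ := prod_fusion hF1 hF2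
  obtain ⟨g, rfl⟩ := hs w
  refine (hp.val V φ g).1 ?_
  exact (PVal_mapOp G _ _ φ g).1 (hG _ h _ g)

section
variable (hc1 : PF.bot ∉ LS5 d L1) (hc2 : PF.bot ∉ LS5 d L2)
  (hK1 : GloballyKComplete (LS5 d L1)) (hK2 : GloballyKComplete (LS5 d L2))
include hK1 hK2

theorem certG_iff {c : PF (Option (M1 ⊕ M2)) → ℕ} (hc : Function.Injective c)
    (φ ψ : PF (Option (M1 ⊕ M2))) :
    ¬ PGlobal (fusionE (LS5 d L1) (LS5 d L2)) φ ψ ↔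
      ∃ xs ∈ sl (sl (allB (sub φ ++ sub ψ).length)),
        certG c (LS5 d L1) (LS5 d L2) φ ψ xs := by
  refine ⟨certG_exists hc, ?_⟩
  rintro ⟨xs, -, h⟩ hφ
  obtain ⟨G, V, g, hG, ha, hv⟩ := certG_sound hK1 hK2 c φ ψ xs h
  exact hv (hφ.sound G hG V ha g)

theorem fusion_GK {c : PF (Option (M1 ⊕ M2)) → ℕ} (hc : Function.Injective c) :
    GloballyKComplete (fusionE (LS5 d L1) (LS5 d L2)) := by
  intro φ ψ
  refine ⟨fun h F hF V ha => h.sound F hF V ha, fun hφ => ?_⟩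
  by_contra hcon
  obtain ⟨xs, -, h⟩ := certG_exists hc hcon
  obtain ⟨G, V, g, hG, ha, hv⟩ := certG_sound hK1 hK2 c φ ψ xs h
  exact hv (hφ G hG V ha g)

include hc2 in
theorem consG1 (φ ψ : PF (Option M1)) :
    PGlobal (fusionE (LS5 d L1) (LS5 d L2)) (PF.mapOp (Option.map Sum.inl) φ)
      (PF.mapOp (Option.map Sum.inl) ψ) ↔ PGlobal (LS5 d L1) φ ψ := by
  refine ⟨fun h => ?_, fun h => PGlobal.tr (PF.mapOp (Option.map Sum.inl)) (fun _ => fus1)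
    (fun _ _ => rfl) (Option.map Sum.inl) (fun _ _ => rfl) h⟩
  rw [hK1]
  intro F1 hF1 V ha w
  obtain ⟨F2, hF2⟩ := exists_frame (GK_K (isPLogic_LS5 d L2) hK2) hc2
  obtain ⟨G, hG, ⟨p, hp, hs⟩, -⟩ := prod_fusion hF1 hF2
  obtain ⟨g, rfl⟩ := hs w
  refine (hp.val V ψ g).1 ?_
  refine (PVal_mapOp G _ _ ψ g).1 (h.sound G hG _ (fun g => ?_) g)
  exact (PVal_mapOp G _ _ φ g).2 ((hp.val V φ g).2 (ha _))

include hc1 in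
theorem consG2 (φ ψ : PF (Option M2)) :
    PGlobal (fusionE (LS5 d L1) (LS5 d L2)) (PF.mapOp (Option.map Sum.inr) φ)
      (PF.mapOp (Option.map Sum.inr) ψ) ↔ PGlobal (LS5 d L2) φ ψ := by
  refine ⟨fun h => ?_, fun h => PGlobal.tr (PF.mapOp (Option.map Sum.inr)) (fun _ => fus2)
    (fun _ _ => rfl) (Option.map Sum.inr) (fun _ _ => rfl) h⟩
  rw [hK2]
  intro F2 hF2 V ha w
  obtain ⟨F1, hF1⟩ := exists_frame (GK_K (isPLogic_LS5 d L1) hK1) hc1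
  obtain ⟨G, hG, -, ⟨p, hp, hs⟩⟩ := prod_fusion hF1 hF2
  obtain ⟨g, rfl⟩ := hs w
  refine (hp.val V ψ g).1 ?_
  refine (PVal_mapOp G _ _ ψ g).1 (h.sound G hG _ (fun g => ?_) g)
  exact (PVal_mapOp G _ _ φ g).2 ((hp.val V φ g).2 (ha _))

end

end



/-! ### Part G: computability -/

theorem encode_inj {M : Type} {eM : M → ℕ} (h : Function.Injective eM) :
    Function.Injective (PF.encode eM) := by
  intro φ
  induction φ with
  | atom n => intro ψ hh; cases ψ <;> simp_all [PF.encode]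
  | neg a ih =>
    intro ψ hh
    cases ψ <;> simp only [PF.encode, Nat.pair_eq_pair] at hh <;> try omega
    rw [ih hh.2]
  | and a b iha ihb =>
    intro ψ hh
    cases ψ <;> simp only [PF.encode, Nat.pair_eq_pair] at hh <;> try omega
    rw [iha hh.2.1, ihb hh.2.2]
  | box m a ih =>
    intro ψ hh
    cases ψ <;> simp only [PF.encode, Nat.pair_eq_pair] at hh <;> try omega
    rw [h hh.2.1, ih hh.2.2]

section cc
variable {σ : Type} (A : ℕ → σ) (N : σ → σ) (C : σ → σ → σ) (B : ℕ → σ → σ) (Z : σ)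

theorem up_lt {n : ℕ} (h : n.unpair.1 ≠ 0) : n.unpair.2 < n := by
  have := Nat.add_le_pair n.unpair.1 n.unpair.2
  rw [Nat.pair_unpair] at this
  omega

def cc (n : ℕ) : σ :=
  if h0 : n.unpair.1 = 0 then A n.unpair.2
  else if n.unpair.1 = 1 then N (cc n.unpair.2)
  else if n.unpair.1 = 2 then C (cc n.unpair.2.unpair.1) (cc n.unpair.2.unpair.2)
  else if n.unpair.1 = 3 then B n.unpair.2.unpair.1 (cc n.unpair.2.unpair.2)
  else Z
termination_by n
decreasing_by
  · exact up_lt h0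
  · exact (Nat.unpair_left_le _).trans_lt (up_lt h0)
  · exact (Nat.unpair_right_le _).trans_lt (up_lt h0)
  · exact (Nat.unpair_right_le _).trans_lt (up_lt h0)

def ccS (l : List σ) : σ :=
  if l.length.unpair.1 = 0 then A l.length.unpair.2
  else if l.length.unpair.1 = 1 then N (l.getD l.length.unpair.2 Z)
  else if l.length.unpair.1 = 2 then
    C (l.getD l.length.unpair.2.unpair.1 Z) (l.getD l.length.unpair.2.unpair.2 Z)
  else if l.length.unpair.1 = 3 then
    B l.length.unpair.2.unpair.1 (l.getD l.length.unpair.2.unpair.2 Z)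
  else Z

theorem ccS_eq (n : ℕ) :
    ccS A N C B Z ((List.range n).map (cc A N C B Z)) = cc A N C B Z n := by
  have g : ∀ i < n, ((List.range n).map (cc A N C B Z)).getD i Z = cc A N C B Z i := by
    intro i hi
    simp [List.getD, hi]
  rw [ccS, cc]
  simp only [List.length_map, List.length_range]
  by_cases h0 : n.unpair.1 = 0
  · simp [h0]
  · have h1 := up_lt h0
    rw [g _ h1, g _ ((Nat.unpair_left_le _).trans_lt h1), g _ ((Nat.unpair_right_le _).trans_lt h1)]
    simp [h0]

variable [Primcodable σ]

theorem ccS_prim (hA : Primrec A) (hN : Primrec N) (hC : Primrec₂ C) (hB : Primrec₂ B) :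
    Primrec (ccS A N C B Z) := by
  have len : Primrec (fun l : List σ => l.length) := Primrec.list_length
  have u := Primrec.unpair.comp len
  have t := Primrec.fst.comp u
  have x := Primrec.snd.comp u
  have x1 := Primrec.fst.comp (Primrec.unpair.comp x)
  have x2 := Primrec.snd.comp (Primrec.unpair.comp x)
  have gd := Primrec.list_getD Z
  have tt : ∀ k : ℕ, PrimrecPred (fun l : List σ => l.length.unpair.1 = k) := fun k =>
    Primrec.eq.comp t (Primrec.const k)
  exact Primrec.ite (tt 0) (hA.comp x) (Primrec.ite (tt 1) (hN.comp (gd.comp Primrec.id x))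
    (Primrec.ite (tt 2) (hC.comp (gd.comp Primrec.id x1) (gd.comp Primrec.id x2))
      (Primrec.ite (tt 3) (hB.comp x1 (gd.comp Primrec.id x2)) (Primrec.const Z))))

theorem cc_prim (hA : Primrec A) (hN : Primrec N) (hC : Primrec₂ C) (hB : Primrec₂ B) :
    Primrec (cc A N C B Z) := by
  have := Primrec.nat_strong_rec (fun (_ : Unit) n => cc A N C B Z n)
    (g := fun _ l => some (ccS A N C B Z l))
    (Primrec.option_some.comp ((ccS_prim A N C B Z hA hN hC hB).comp Primrec.snd))
    (fun _ n => by rw [ccS_eq])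
  exact this.comp (Primrec.const ()) Primrec.id

end cc

def good : ℕ → Bool := cc (fun _ => true) (fun a => a) (fun a b => a && b) (fun _ a => a) false

theorem good_prim : Primrec good :=
  cc_prim _ _ _ _ _ (Primrec.const _) Primrec.id Primrec.and Primrec₂.right

theorem pf_cc {σ : Type} (A : ℕ → σ) (N : σ → σ) (C : σ → σ → σ) (B : ℕ → σ → σ) (Z : σ)
    (f : PF ℕ → σ) (hA : ∀ n, f (.atom n) = A n) (hN : ∀ a, f (.neg a) = N (f a))
    (hC : ∀ a b, f (.and a b) = C (f a) (f b)) (hB : ∀ m a, f (.box m a) = B m (f a)) (φ : PF ℕ) :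
    f φ = cc A N C B Z (PF.encode id φ) := by
  induction φ with
  | atom n => rw [cc]; simp [PF.encode, hA]
  | neg a ih => rw [cc]; simp [PF.encode, hN, ih]
  | and a b iha ihb => rw [cc]; simp [PF.encode, hC, iha, ihb]
  | box m a ih => rw [cc]; simp [PF.encode, hB, ih]

theorem good_iff (n : ℕ) : good n = true ↔ ∃ φ, PF.encode id φ = n := by
  constructor
  · induction n using Nat.strong_induction_on with
    | _ n ih =>
    intro h
    have hp := Nat.pair_unpair n
    have hp2 := Nat.pair_unpair n.unpair.2
    rw [good, cc] at h
    split_ifs at h with h0 h1 h2 h3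
    · exact ⟨.atom n.unpair.2, by rw [PF.encode, ← h0, hp]⟩
    · obtain ⟨a, ha⟩ := ih _ (up_lt h0) h
      exact ⟨.neg a, by rw [PF.encode, ha, ← h1, hp]⟩
    · rw [Bool.and_eq_true] at h
      obtain ⟨a, ha⟩ := ih _ ((Nat.unpair_left_le _).trans_lt (up_lt h0)) h.1
      obtain ⟨b, hb⟩ := ih _ ((Nat.unpair_right_le _).trans_lt (up_lt h0)) h.2
      exact ⟨.and a b, by rw [PF.encode, ha, hb, hp2, ← h2, hp]⟩
    · obtain ⟨a, ha⟩ := ih _ ((Nat.unpair_right_le _).trans_lt (up_lt h0)) h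
      exact ⟨.box n.unpair.2.unpair.1 a, by rw [PF.encode, ha, id, hp2, ← h3, hp]⟩
  · rintro ⟨φ, rfl⟩
    exact (pf_cc _ _ _ _ _ (fun _ => true) (fun _ => rfl) (fun _ => rfl) (fun _ _ => rfl)
      (fun _ _ => rfl) φ).symm

noncomputable instance pfEnc : Encodable (PF ℕ) where
  encode := PF.encode id
  decode := Function.partialInv (PF.encode id)
  encodek := Function.partialInv_left (encode_inj Function.injective_id)

theorem enc_eq (φ : PF ℕ) : Encodable.encode φ = PF.encode id φ := rfl

theorem dec_eq (n : ℕ) (φ : PF ℕ) : Encodable.decode (α := PF ℕ) n = some φ ↔ PF.encode id φ = n := by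
  exact Function.Injective.isPartialInv (encode_inj Function.injective_id) φ n

noncomputable instance pfPrim : Primcodable (PF ℕ) where
  prim := by
    have h : Primrec (fun n : ℕ => if good n = true then n + 1 else 0) :=
      Primrec.ite (Primrec.eq.comp good_prim (Primrec.const true)) Primrec.succ (Primrec.const 0)
    refine Nat.Primrec.of_eq (Primrec.nat_iff.1 h) fun n => ?_
    by_cases hg : good n = true
    · rw [if_pos hg]
      obtain ⟨φ, hφ⟩ := (good_iff n).1 hg
      rw [(dec_eq n φ).2 hφ, Encodable.encode_some, enc_eq, hφ]
    · rw [if_neg hg]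
      have : Encodable.decode (α := PF ℕ) n = none := by
        rw [Option.eq_none_iff_forall_not_mem]
        intro φ hφ
        exact hg ((good_iff n).2 ⟨φ, (dec_eq n φ).1 hφ⟩)
      rw [this]; rfl

theorem pf_prim {σ : Type} [Primcodable σ] {A : ℕ → σ} {N : σ → σ} {C : σ → σ → σ} {B : ℕ → σ → σ}
    (f : PF ℕ → σ) (hA' : Primrec A) (hN' : Primrec N) (hC' : Primrec₂ C) (hB' : Primrec₂ B)
    (hA : ∀ n, f (.atom n) = A n) (hN : ∀ a, f (.neg a) = N (f a))
    (hC : ∀ a b, f (.and a b) = C (f a) (f b)) (hB : ∀ m a, f (.box m a) = B m (f a)) :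
    Primrec f :=
  ((cc_prim A N C B (A 0) hA' hN' hC' hB').comp Primrec.encode).of_eq fun φ =>
    (pf_cc A N C B (A 0) f hA hN hC hB φ).symm

theorem p_atom : Primrec (PF.atom : ℕ → PF ℕ) :=
  Primrec.encode_iff.1 (Primrec₂.natPair.comp (Primrec.const 0) Primrec.id)

theorem p_neg : Primrec (PF.neg : PF ℕ → PF ℕ) :=
  Primrec.encode_iff.1 (Primrec₂.natPair.comp (Primrec.const 1) Primrec.encode)

theorem p_and : Primrec₂ (PF.and : PF ℕ → PF ℕ → PF ℕ) :=
  Primrec.encode_iff.1 (Primrec₂.natPair.comp (Primrec.const 2)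
    (Primrec₂.natPair.comp (Primrec.encode.comp Primrec.fst) (Primrec.encode.comp Primrec.snd)))

theorem p_box : Primrec₂ (PF.box : ℕ → PF ℕ → PF ℕ) :=
  Primrec.encode_iff.1 (Primrec₂.natPair.comp (Primrec.const 3)
    (Primrec₂.natPair.comp Primrec.fst (Primrec.encode.comp Primrec.snd)))

theorem p_imp : Primrec₂ (PF.imp : PF ℕ → PF ℕ → PF ℕ) :=
  p_neg.comp (p_and.comp Primrec.fst (p_neg.comp Primrec.snd))

theorem p_dia (e : ℕ) : Primrec (PF.dia e : PF ℕ → PF ℕ) :=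
  p_neg.comp (p_box.comp (Primrec.const e) p_neg)

theorem p_mapOp {t : ℕ → ℕ} (ht : Primrec t) : Primrec (PF.mapOp t) :=
  pf_prim (B := fun m a => PF.box (t m) a) _ p_atom p_neg p_and
    (p_box.comp (ht.comp Primrec.fst) Primrec.snd)
    (fun _ => rfl) (fun _ => rfl) (fun _ _ => rfl) (fun _ _ => rfl)

theorem p_ops : Primrec (ops : PF ℕ → List ℕ) :=
  pf_prim _ (Primrec.const []) Primrec.id Primrec.list_append Primrec.list_cons
    (fun _ => rfl) (fun _ => rfl) (fun _ _ => rfl) (fun _ _ => rfl)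

theorem p_sub : Primrec (sub : PF ℕ → List (PF ℕ)) := by
  have hf : Primrec (fun p : PF ℕ × List (PF ℕ) => p.2) := Primrec.snd
  have h : Primrec (fun φ : PF ℕ => (φ, sub φ)) := by
    refine pf_prim (A := fun n => (PF.atom n, [PF.atom n]))
      (N := fun p => (PF.neg p.1, PF.neg p.1 :: p.2))
      (C := fun p q => (PF.and p.1 q.1, PF.and p.1 q.1 :: (p.2 ++ q.2)))
      (B := fun m p => (PF.box m p.1, PF.box m p.1 :: p.2)) _ ?_ ?_ ?_ ?_
      (fun _ => rfl) (fun _ => rfl) (fun _ _ => rfl) (fun _ _ => rfl)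
    · exact p_atom.pair (Primrec.list_cons.comp p_atom (Primrec.const []))
    · have a := p_neg.comp (Primrec.fst (α := PF ℕ) (β := List (PF ℕ)))
      exact a.pair (Primrec.list_cons.comp a Primrec.snd)
    · have a : Primrec (fun z : (PF ℕ × List (PF ℕ)) × (PF ℕ × List (PF ℕ)) => PF.and z.1.1 z.2.1) :=
        p_and.comp (Primrec.fst.comp Primrec.fst) (Primrec.fst.comp Primrec.snd)
      exact a.pair (Primrec.list_cons.comp a (Primrec.list_append.comp
        (Primrec.snd.comp Primrec.fst) (Primrec.snd.comp Primrec.snd)))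
    · have a : Primrec (fun z : ℕ × (PF ℕ × List (PF ℕ)) => PF.box z.1 z.2.1) :=
        p_box.comp Primrec.fst (Primrec.fst.comp Primrec.snd)
      exact a.pair (Primrec.list_cons.comp a (Primrec.snd.comp Primrec.snd))
  exact hf.comp h

theorem p_sur {f : ℕ → Option ℕ} (hf : Primrec f) : Primrec (sur f (PF.encode id)) := by
  have hs : Primrec (fun p : PF ℕ × PF ℕ => p.2) := Primrec.snd
  have h : Primrec (fun φ : PF ℕ => (φ, sur f (PF.encode id) φ)) := by
    refine pf_prim (A := fun n => (PF.atom n, PF.atom (PF.encode id (PF.atom n))))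
      (N := fun p => (PF.neg p.1, PF.neg p.2))
      (C := fun p q => (PF.and p.1 q.1, PF.and p.2 q.2))
      (B := fun m p => (PF.box m p.1, Option.casesOn (f m) (PF.atom (PF.encode id (PF.box m p.1)))
        (fun o => PF.box o p.2))) _ ?_ ?_ ?_ ?_
      (fun _ => rfl) (fun _ => rfl) (fun _ _ => rfl) ?_
    · exact p_atom.pair (p_atom.comp (Primrec.encode.comp p_atom))
    · exact (p_neg.comp Primrec.fst).pair (p_neg.comp Primrec.snd)
    · exact (p_and.comp (Primrec.fst.comp Primrec.fst) (Primrec.fst.comp Primrec.snd)).pair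
        (p_and.comp (Primrec.snd.comp Primrec.fst) (Primrec.snd.comp Primrec.snd))
    · have a : Primrec (fun z : ℕ × (PF ℕ × PF ℕ) => PF.box z.1 z.2.1) :=
        p_box.comp Primrec.fst (Primrec.fst.comp Primrec.snd)
      refine a.pair (Primrec.option_casesOn (hf.comp Primrec.fst)
        (p_atom.comp (Primrec.encode.comp a)) ?_)
      exact p_box.comp Primrec.snd (Primrec.snd.comp (Primrec.snd.comp Primrec.fst))
    · intro m a
      rcases h : f m with _ | o <;> simp [sur, h]
  exact hs.comp h

theorem p_conj : Primrec (conj : List (PF ℕ) → PF ℕ) :=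
  Primrec.list_foldr (h := fun (_ : List (PF ℕ)) (p : PF ℕ × PF ℕ) => PF.and p.1 p.2)
    Primrec.id (Primrec.const top)
    (p_and.comp (Primrec.fst.comp Primrec.snd) (Primrec.snd.comp Primrec.snd))

theorem p_disj : Primrec (disj : List (PF ℕ) → PF ℕ) :=
  p_neg.comp (p_conj.comp (Primrec.list_map Primrec.id (p_neg.comp Primrec.snd)))

theorem p_tp : Primrec₂ (tp : List (PF ℕ) → List Bool → PF ℕ) := by
  refine p_conj.comp (Primrec.list_map (Primrec.list_range.comp (Primrec.list_length.comp
    Primrec.fst)) ?_)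
  have b : Primrec (fun z : (List (PF ℕ) × List Bool) × ℕ => z.1.2.getD z.2 false) :=
    (Primrec.list_getD false).comp (Primrec.snd.comp Primrec.fst) Primrec.snd
  have s : Primrec (fun z : (List (PF ℕ) × List Bool) × ℕ => z.1.1.getD z.2 top) :=
    (Primrec.list_getD top).comp (Primrec.fst.comp Primrec.fst) Primrec.snd
  exact Primrec.cond b s (p_neg.comp s)

theorem p_qs : Primrec₂ (qs 0 : List (PF ℕ) → List (List Bool) → PF ℕ) := by
  refine p_and.comp (p_conj.comp (Primrec.list_map Primrec.snd ?_))
    (p_box.comp (Primrec.const 0) (p_disj.comp (Primrec.list_map Primrec.snd ?_)))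
  · exact (p_dia 0).comp (p_tp.comp (Primrec.fst.comp Primrec.fst) Primrec.snd)
  · exact p_tp.comp (Primrec.fst.comp Primrec.fst) Primrec.snd

theorem p_chi : Primrec₂ (chi 0 : List (PF ℕ) → List (List (List Bool)) → PF ℕ) :=
  p_disj.comp (Primrec.list_map Primrec.snd (p_qs.comp (Primrec.fst.comp Primrec.fst) Primrec.snd))

theorem p_AA : Primrec (fun z : (List (PF ℕ) × List ℕ × List (List (List Bool))) × ℕ =>
    AA 0 z.1.1 z.1.2.1 z.1.2.2 z.2) := by
  have : Primrec (fun z : (List (PF ℕ) × List ℕ × List (List (List Bool))) × ℕ =>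
    Nat.rec (motive := fun _ => PF ℕ) top (fun n IH => PF.box 0 (PF.and (chi 0 z.1.1 z.1.2.2)
      (conj (z.1.2.1.map fun m => PF.box m IH)))) z.2) := by
    refine Primrec.nat_rec' (f := fun z : (List (PF ℕ) × List ℕ × List (List (List Bool))) × ℕ => z.2)
      (g := fun _ => (top : PF ℕ)) (h := fun z p => PF.box 0 (PF.and (chi 0 z.1.1 z.1.2.2)
      (conj (z.1.2.1.map fun m => PF.box m p.2)))) Primrec.snd (Primrec.const top) ?_
    have h1 : Primrec (fun y : ((List (PF ℕ) × List ℕ × List (List (List Bool))) × ℕ) × (ℕ × PF ℕ) =>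
        chi 0 y.1.1.1 y.1.1.2.2) :=
      p_chi.comp (Primrec.fst.comp (Primrec.fst.comp Primrec.fst))
        (Primrec.snd.comp (Primrec.snd.comp (Primrec.fst.comp Primrec.fst)))
    have h2 : Primrec (fun y : ((List (PF ℕ) × List ℕ × List (List (List Bool))) × ℕ) × (ℕ × PF ℕ) =>
        y.1.1.2.1) :=
      Primrec.fst.comp (Primrec.snd.comp (Primrec.fst.comp Primrec.fst))
    have h3 : Primrec₂ (fun (y : ((List (PF ℕ) × List ℕ × List (List (List Bool))) × ℕ) × (ℕ × PF ℕ))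
        (m : ℕ) => PF.box m y.2.2) :=
      p_box.comp Primrec.snd (Primrec.snd.comp (Primrec.snd.comp Primrec.fst))
    exact p_box.comp (Primrec.const 0) (p_and.comp h1 (p_conj.comp (Primrec.list_map h2 h3)))
  refine this.of_eq fun z => ?_
  obtain ⟨⟨S, os, xs⟩, n⟩ := z
  induction n with
  | zero => rfl
  | succ n ih => simp only [AA]; rw [← ih]

theorem p_PiG : Primrec (fun z : (PF ℕ × PF ℕ) × List (List (List Bool)) =>
    PiG 0 z.1.1 z.1.2 z.2) :=
  p_and.comp (p_chi.comp (Primrec.list_append.comp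
    (p_sub.comp (Primrec.fst.comp Primrec.fst)) (p_sub.comp (Primrec.snd.comp Primrec.fst)))
    Primrec.snd) (Primrec.fst.comp Primrec.fst)

theorem p_sl {α : Type} [Primcodable α] : Primrec (sl : List α → List (List α)) := by
  have h3 : Primrec₂ (fun (y : List α × (α × List (List α))) (l : List α) => y.2.1 :: l) :=
    Primrec.list_cons.comp (Primrec.fst.comp (Primrec.snd.comp Primrec.fst)) Primrec.snd
  have h2 : Primrec (fun (y : List α × (α × List (List α))) => y.2.2) :=
    Primrec.snd.comp Primrec.snd
  exact Primrec.list_foldr (h := fun (_ : List α) (p : α × List (List α)) =>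
      p.2 ++ p.2.map (fun l => p.1 :: l)) Primrec.id (Primrec.const [[]])
    (Primrec.list_append.comp h2 (Primrec.list_map h2 h3))

theorem p_allB : Primrec allB := by
  have : Primrec (fun n : ℕ => Nat.rec (motive := fun _ => List (List Bool)) [[]]
      (fun _ r => r.map (fun t => true :: t) ++ r.map (fun t => false :: t)) n) := by
    refine Primrec.nat_rec' (f := fun n : ℕ => n) (g := fun _ => [[]]) (h := fun _ p =>
      p.2.map (fun t => true :: t) ++ p.2.map (fun t => false :: t))
      Primrec.id (Primrec.const [[]]) ?_
    have h2 : Primrec (fun y : ℕ × (ℕ × List (List Bool)) => y.2.2) := Primrec.snd.comp Primrec.snd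
    have h3 : ∀ b : Bool, Primrec₂ (fun (y : ℕ × (ℕ × List (List Bool))) (t : List Bool) => b :: t) :=
      fun b => Primrec.list_cons.comp (Primrec.const b) Primrec.snd
    exact Primrec.list_append.comp (Primrec.list_map h2 (h3 true)) (Primrec.list_map h2 (h3 false))
  refine this.of_eq fun n => ?_
  induction n with
  | zero => rfl
  | succ n ih => simp only [allB]; rw [← ih]



/-! ### Part H: truth-table reductions -/

theorem comp_all {β : Type} [Primcodable β] {f : β → Bool} (hf : Computable f) :
    Computable (fun l : List β => l.all f) := by
  have h3 : Computable₂ (fun (z : List β × (ℕ × Bool)) (b : β) => f b) := hf.comp Computable.snd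
  have h1 : Computable (fun z : List β × (ℕ × Bool) => z.1[z.2.1]?) :=
    Computable.list_getElem?.comp Computable.fst (Computable.fst.comp Computable.snd)
  have h2 : Computable (fun z : List β × (ℕ × Bool) =>
      (Option.casesOn (z.1[z.2.1]?) true (fun b => f b) : Bool)) :=
    Computable.option_casesOn h1 (Computable.const true) h3
  have h4 : Computable₂ (fun (l : List β) (p : ℕ × Bool) =>
      p.2 && (Option.casesOn (l[p.1]?) true (fun b => f b) : Bool)) :=
    Primrec.and.to_comp.comp (Computable.snd.comp Computable.snd) h2
  have h5 := Computable.nat_rec (f := fun l : List β => l.length) (g := fun _ => true)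
    Computable.list_length (Computable.const true) h4
  refine h5.of_eq fun l => ?_
  have : ∀ n ≤ l.length, (Nat.rec (motive := fun _ => Bool) true (fun y IH =>
      IH && (Option.casesOn (l[y]?) true (fun b => f b) : Bool)) n) = (l.take n).all f := by
    intro n hn
    induction n with
    | zero => simp
    | succ n ih =>
      have hn' : n < l.length := hn
      have : l.take (n+1) = l.take n ++ [l[n]] := by simp
      rw [this, List.all_append, ← ih hn'.le]
      simp [hn']
  have := this l.length le_rfl
  rw [List.take_length] at this
  exact this

theorem tt_red {α β : Type} [Primcodable α] [Primcodable β] {D : β → Prop} (hD : ComputablePred D)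
    {wf : α → List β} (hwf : Primrec wf) {Q : α → List (List β)} (hQ : Primrec Q) {T : α → Prop}
    (hT : ∀ a, T a ↔ (∀ q ∈ wf a, D q) ∧ ¬ ∃ ql ∈ Q a, ∀ q ∈ ql, ¬ D q) : ComputablePred T := by
  obtain ⟨f, hf, rfl⟩ := ComputablePred.computable_iff.1 hD
  refine ComputablePred.computable_iff.2 ⟨fun a => (wf a).all f &&
    (Q a).all (fun ql => !(ql.all (fun q => !(f q)))), ?_, ?_⟩
  · have hn : Computable (fun q => !(f q)) := Primrec.not.to_comp.comp hf
    have h1 : Computable (fun ql : List β => !(ql.all (fun q => !(f q)))) :=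
      Primrec.not.to_comp.comp (comp_all hn)
    exact Primrec.and.to_comp.comp ((comp_all hf).comp hwf.to_comp) ((comp_all h1).comp hQ.to_comp)
  · funext a
    rw [eq_iff_iff, hT]
    simp

theorem mapOp_inj {M M' : Type} {e : M → M'} (h : Function.Injective e) :
    Function.Injective (PF.mapOp e) := by
  intro φ
  induction φ with
  | atom n => intro ψ hh; cases ψ <;> simp_all [PF.mapOp]
  | neg a ih =>
    intro ψ hh
    cases ψ <;> simp only [PF.mapOp, PF.neg.injEq, reduceCtorEq] at hh
    rw [ih hh]
  | and a b iha ihb =>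
    intro ψ hh
    cases ψ <;> simp only [PF.mapOp, PF.and.injEq, reduceCtorEq] at hh
    rw [iha hh.1, ihb hh.2]
  | box m a ih =>
    intro ψ hh
    cases ψ <;> simp only [PF.mapOp, PF.box.injEq, reduceCtorEq] at hh
    rw [h hh.1, ih hh.2]

theorem mapOp_back {A B : Type} {g : A → ℕ} {t : ℕ → ℕ} {i : B → A} {h : B → ℕ}
    (H : ∀ a k, g a = t k → ∃ b, a = i b ∧ k = h b) :
    ∀ θ ξ, PF.mapOp g θ = PF.mapOp t ξ → ∃ φ, θ = PF.mapOp i φ ∧ ξ = PF.mapOp h φ := by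
  intro θ
  induction θ with
  | atom n =>
    intro ξ hh
    cases ξ <;> simp only [PF.mapOp, PF.atom.injEq, reduceCtorEq] at hh
    subst hh
    exact ⟨.atom n, rfl, rfl⟩
  | neg a ih =>
    intro ψ hh
    cases ψ <;> simp only [PF.mapOp, PF.neg.injEq, reduceCtorEq] at hh
    obtain ⟨x, rfl, rfl⟩ := ih _ hh
    exact ⟨.neg x, rfl, rfl⟩
  | and a b iha ihb =>
    intro ψ hh
    cases ψ <;> simp only [PF.mapOp, PF.and.injEq, reduceCtorEq] at hh
    obtain ⟨x, rfl, rfl⟩ := iha _ hh.1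
    obtain ⟨y, rfl, rfl⟩ := ihb _ hh.2
    exact ⟨.and x y, rfl, rfl⟩
  | box m a ih =>
    intro ψ hh
    cases ψ <;> simp only [PF.mapOp, PF.box.injEq, reduceCtorEq] at hh
    obtain ⟨x, rfl, rfl⟩ := ih _ hh.2
    obtain ⟨b, rfl, rfl⟩ := H _ _ hh.1
    exact ⟨.box b x, rfl, rfl⟩

theorem mapOp_comp {A B C : Type} (f : A → B) (g : B → C) (φ : PF A) :
    PF.mapOp g (PF.mapOp f φ) = PF.mapOp (fun a => g (f a)) φ := by
  induction φ <;> simp_all [PF.mapOp]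

theorem encode_mapOp {M : Type} (e : M → ℕ) (φ : PF M) :
    PF.encode id (PF.mapOp e φ) = PF.encode e φ := by
  induction φ <;> simp_all [PF.mapOp, PF.encode]

def CS {M : Type} (e : M → ℕ) (L : Set (PF M)) (ξ : PF ℕ) : Prop := ∃ φ ∈ L, PF.mapOp e φ = ξ

def CSG {M : Type} (e : M → ℕ) (L : Set (PF M)) (p : PF ℕ × PF ℕ) : Prop :=
  ∃ φ ψ, PGlobal L φ ψ ∧ PF.mapOp e φ = p.1 ∧ PF.mapOp e ψ = p.2

theorem enc_iff {M : Type} (e : M → ℕ) (φ : PF M) (ξ : PF ℕ) :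
    PF.encode e φ = PF.encode id ξ ↔ PF.mapOp e φ = ξ := by
  rw [← encode_mapOp]
  exact (encode_inj Function.injective_id).eq_iff

theorem CS_map {M : Type} {e : M → ℕ} (he : Function.Injective e) {L : Set (PF M)} (φ : PF M) :
    CS e L (PF.mapOp e φ) ↔ φ ∈ L := by
  constructor
  · rintro ⟨ψ, h, h'⟩
    rwa [← mapOp_inj he h']
  · exact fun h => ⟨φ, h, rfl⟩

theorem CSG_map {M : Type} {e : M → ℕ} (he : Function.Injective e) {L : Set (PF M)} (φ ψ : PF M) :
    CSG e L (PF.mapOp e φ, PF.mapOp e ψ) ↔ PGlobal L φ ψ := by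
  constructor
  · rintro ⟨a, b, h, h', h''⟩
    rwa [← mapOp_inj he h', ← mapOp_inj he h'']
  · exact fun h => ⟨φ, ψ, h, rfl, rfl⟩

theorem compPred_comp {α β : Type} [Primcodable α] [Primcodable β] {p : β → Prop}
    (h : ComputablePred p) {g : α → β} (hg : Computable g) : ComputablePred (fun a => p (g a)) := by
  obtain ⟨f, hf, rfl⟩ := ComputablePred.computable_iff.1 h
  exact ComputablePred.computable_iff.2 ⟨fun a => f (g a), hf.comp hg, rfl⟩

theorem compPred_cond {α : Type} [Primcodable α] {p q : α → Prop}
    (h : ComputablePred p) (h' : ComputablePred q) :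
    ComputablePred (fun z : Bool × α => bif z.1 then p z.2 else q z.2) := by
  obtain ⟨f, hf, rfl⟩ := ComputablePred.computable_iff.1 h
  obtain ⟨g, hg, rfl⟩ := ComputablePred.computable_iff.1 h'
  refine ComputablePred.computable_iff.2 ⟨fun z => bif z.1 then f z.2 else g z.2,
    Computable.cond Computable.fst (hf.comp Computable.snd) (hg.comp Computable.snd), ?_⟩
  funext z
  obtain ⟨b, z⟩ := z
  cases b <;> rfl

theorem dec_CS {M : Type} (e : M → ℕ) (L : Set (PF M)) :
    DecidableP e L ↔ ComputablePred (CS e L) := by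
  constructor
  · intro h
    have := compPred_comp h (Computable.encode (α := PF ℕ))
    convert this using 1
    funext ξ
    simp only [CS, enc_eq, enc_iff]
  · intro h
    obtain ⟨f, hf, hh⟩ := ComputablePred.computable_iff.1 h
    refine ComputablePred.computable_iff.2 ⟨fun n =>
      Option.casesOn (Encodable.decode (α := PF ℕ) n) false (fun ξ => f ξ), ?_, ?_⟩
    · have h3 : Computable₂ (fun (n : ℕ) (ξ : PF ℕ) => f ξ) := hf.comp Computable.snd
      exact Computable.option_casesOn Computable.decode (Computable.const false) h3
    · funext n
      dsimp only
      rcases hd : Encodable.decode (α := PF ℕ) n with _ | ξ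
      · simp only [eq_iff_iff, Bool.false_eq_true, iff_false]
        rintro ⟨φ, -, rfl⟩
        rw [← encode_mapOp, (dec_eq _ _).2 rfl] at hd
        cases hd
      · have := congrFun hh ξ
        simp only [← this, CS]
        rw [dec_eq] at hd
        subst hd
        simp only [enc_iff]

theorem dec_CSG {M : Type} (e : M → ℕ) (L : Set (PF M)) :
    GloballyDecidableP e L ↔ ComputablePred (CSG e L) := by
  constructor
  · intro h
    have hg : Computable (fun p : PF ℕ × PF ℕ => (Encodable.encode p.1, Encodable.encode p.2)) :=
      Computable.pair (Computable.encode.comp Computable.fst) (Computable.encode.comp Computable.snd)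
    have := compPred_comp h hg
    convert this using 1
    funext ξ
    simp only [CSG, enc_eq, enc_iff]
  · intro h
    obtain ⟨f, hf, hh⟩ := ComputablePred.computable_iff.1 h
    refine ComputablePred.computable_iff.2 ⟨fun p : ℕ × ℕ =>
      Option.casesOn (Encodable.decode (α := PF ℕ) p.1) false (fun ξ =>
        Option.casesOn (Encodable.decode (α := PF ℕ) p.2) false (fun η => f (ξ, η))), ?_, ?_⟩
    · have h3 : Computable₂ (fun (z : (ℕ × ℕ) × PF ℕ) (η : PF ℕ) => f (z.2, η)) :=
        hf.comp (Computable.pair (Computable.snd.comp Computable.fst) Computable.snd)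
      have h4 : Computable (fun z : (ℕ × ℕ) × PF ℕ => Encodable.decode (α := PF ℕ) z.1.2) :=
        Computable.decode.comp (Computable.snd.comp Computable.fst)
      have h5 : Computable₂ (fun (p : ℕ × ℕ) (ξ : PF ℕ) =>
        (Option.casesOn (Encodable.decode (α := PF ℕ) p.2) false (fun η => f (ξ, η)) : Bool)) :=
        Computable.option_casesOn h4 (Computable.const false) h3
      have h6 : Computable (fun p : ℕ × ℕ => Encodable.decode (α := PF ℕ) p.1) :=
        Computable.decode.comp Computable.fst
      exact Computable.option_casesOn h6 (Computable.const false) h5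
    · funext p
      obtain ⟨m, n⟩ := p
      dsimp only
      rcases hd : Encodable.decode (α := PF ℕ) m with _ | ξ
      · simp only [eq_iff_iff, Bool.false_eq_true, iff_false]
        rintro ⟨φ, ψ, -, rfl, rfl⟩
        rw [← encode_mapOp, (dec_eq _ _).2 rfl] at hd
        cases hd
      rcases hd' : Encodable.decode (α := PF ℕ) n with _ | η
      · simp only [eq_iff_iff, Bool.false_eq_true, iff_false]
        rintro ⟨φ, ψ, -, rfl, rfl⟩
        rw [← encode_mapOp, (dec_eq _ _).2 rfl] at hd'
        cases hd'
      · have := congrFun hh (ξ, η)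
        simp only [← this, CSG]
        rw [dec_eq] at hd hd'
        subst hd hd'
        simp only [enc_iff]

section fwd
variable {M1 M2 : Type} {e1 : M1 → ℕ} {e2 : M2 → ℕ}

theorem eOpt_inj {M : Type} {e : M → ℕ} (h : Function.Injective e) :
    Function.Injective (eOpt e) := by
  intro a b hab
  rcases a with _ | a <;> rcases b with _ | b <;> simp [eOpt] at hab ⊢
  exact h hab

theorem eOptSum_inj (h1 : Function.Injective e1) (h2 : Function.Injective e2) :
    Function.Injective (eOptSum e1 e2) := by
  intro a b hab
  rcases a with _ | a | a <;> rcases b with _ | b | b <;> simp [eOptSum] at hab ⊢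
  · exact h1 hab
  · omega
  · omega
  · exact h2 hab

theorem t1_back : ∀ a k, eOptSum e1 e2 a = 2 * k - 1 →
    ∃ b, a = Option.map Sum.inl b ∧ k = eOpt e1 b := by
  intro a k h
  rcases a with _ | a | a <;> simp only [eOptSum] at h
  · exact ⟨none, rfl, by simp only [eOpt]; omega⟩
  · exact ⟨some a, rfl, by simp only [eOpt]; omega⟩
  · omega

theorem t2_back : ∀ a k, eOptSum e1 e2 a = 2 * k →
    ∃ b, a = Option.map Sum.inr b ∧ k = eOpt e2 b := by
  intro a k h
  rcases a with _ | a | a <;> simp only [eOptSum] at h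
  · exact ⟨none, rfl, by simp only [eOpt]; omega⟩
  · omega
  · exact ⟨some a, rfl, by simp only [eOpt]; omega⟩

theorem t1_fw (φ : PF (Option M1)) : PF.mapOp (eOptSum e1 e2) (PF.mapOp (Option.map Sum.inl) φ) =
    PF.mapOp (fun k => 2 * k - 1) (PF.mapOp (eOpt e1) φ) := by
  rw [mapOp_comp, mapOp_comp]
  congr 1
  funext a
  rcases a with _ | a <;> simp [eOptSum, eOpt]
  omega

theorem t2_fw (φ : PF (Option M2)) : PF.mapOp (eOptSum e1 e2) (PF.mapOp (Option.map Sum.inr) φ) =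
    PF.mapOp (fun k => 2 * k) (PF.mapOp (eOpt e2) φ) := by
  rw [mapOp_comp, mapOp_comp]
  congr 1
  funext a
  rcases a with _ | a <;> simp [eOptSum, eOpt]
  omega

theorem t1_prim : Primrec (fun k : ℕ => 2 * k - 1) :=
  Primrec.nat_sub.comp (Primrec.nat_mul.comp (Primrec.const 2) Primrec.id) (Primrec.const 1)

theorem t2_prim : Primrec (fun k : ℕ => 2 * k) :=
  Primrec.nat_mul.comp (Primrec.const 2) Primrec.id

/-- generic forward reduction -/
theorem fwd_gen {A B : Type} {g : A → ℕ} {t : ℕ → ℕ} {i : B → A} {h : B → ℕ}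
    (H : ∀ a k, g a = t k → ∃ b, a = i b ∧ k = h b)
    (hfw : ∀ φ, PF.mapOp g (PF.mapOp i φ) = PF.mapOp t (PF.mapOp h φ)) (ht : Primrec t)
    {L : Set (PF A)} {K : Set (PF B)} (hc : ∀ φ, PF.mapOp i φ ∈ L ↔ φ ∈ K)
    (hd : DecidableP g L) : DecidableP h K := by
  rw [dec_CS] at hd ⊢
  have := compPred_comp hd (p_mapOp ht).to_comp
  convert this using 1
  funext ξ
  rw [eq_iff_iff]
  constructor
  · rintro ⟨φ, hφ, rfl⟩
    exact ⟨_, (hc φ).2 hφ, hfw φ⟩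
  · rintro ⟨θ, hθ, hh⟩
    obtain ⟨φ, rfl, rfl⟩ := mapOp_back H _ _ hh
    exact ⟨φ, (hc φ).1 hθ, rfl⟩

theorem fwd_genG {A B : Type} {g : A → ℕ} {t : ℕ → ℕ} {i : B → A} {h : B → ℕ}
    (H : ∀ a k, g a = t k → ∃ b, a = i b ∧ k = h b)
    (hfw : ∀ φ, PF.mapOp g (PF.mapOp i φ) = PF.mapOp t (PF.mapOp h φ)) (ht : Primrec t)
    {L : Set (PF A)} {K : Set (PF B)}
    (hc : ∀ φ ψ, PGlobal L (PF.mapOp i φ) (PF.mapOp i ψ) ↔ PGlobal K φ ψ)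
    (hd : GloballyDecidableP g L) : GloballyDecidableP h K := by
  rw [dec_CSG] at hd ⊢
  have hm : Computable (fun p : PF ℕ × PF ℕ => (PF.mapOp t p.1, PF.mapOp t p.2)) :=
    (((p_mapOp ht).comp Primrec.fst).pair ((p_mapOp ht).comp Primrec.snd)).to_comp
  have := compPred_comp hd hm
  convert this using 1
  funext ξ
  rw [eq_iff_iff]
  obtain ⟨ξ, η⟩ := ξ
  constructor
  · rintro ⟨φ, ψ, hφ, h1, h2⟩
    dsimp only at h1 h2
    subst h1 h2
    exact ⟨_, _, (hc φ ψ).2 hφ, hfw φ, hfw ψ⟩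
  · rintro ⟨θ, θ', hθ, hh, hh'⟩
    obtain ⟨φ, rfl, h1⟩ := mapOp_back H _ _ hh
    obtain ⟨ψ, rfl, h2⟩ := mapOp_back H _ _ hh'
    exact ⟨φ, ψ, (hc φ ψ).1 hθ, h1.symm, h2.symm⟩

end fwd

/-! builders and renaming -/
section ren
variable {M : Type} (e : M → ℕ)

theorem ren_conj (l : List (PF M)) : PF.mapOp e (conj l) = conj (l.map (PF.mapOp e)) := by
  induction l with
  | nil => rfl
  | cons a l ih =>
    have : conj (a :: l) = PF.and a (conj l) := rfl
    rw [this, PF.mapOp, ih]; rfl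

theorem ren_disj (l : List (PF M)) : PF.mapOp e (disj l) = disj (l.map (PF.mapOp e)) := by
  simp only [disj, PF.mapOp, ren_conj, List.map_map]
  rfl

theorem ren_tp (S : List (PF M)) (t : List Bool) :
    PF.mapOp e (tp S t) = tp (S.map (PF.mapOp e)) t := by
  simp only [tp, ren_conj, List.map_map, List.length_map]
  congr 1
  refine List.map_congr_left fun i hi => ?_
  have : (S.map (PF.mapOp e)).getD i top = PF.mapOp e (S.getD i top) := by
    have : (top : PF ℕ) = PF.mapOp e top := rfl
    rw [this, List.getD_map]
  rw [Function.comp, this]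
  cases t.getD i false <;> rfl

theorem ren_qs (e0 : M) (S : List (PF M)) (x : List (List Bool)) :
    PF.mapOp e (qs e0 S x) = qs (e e0) (S.map (PF.mapOp e)) x := by
  have : tp (S.map (PF.mapOp e)) = fun t => PF.mapOp e (tp S t) := by
    funext t; rw [ren_tp]
  simp only [qs, PF.mapOp, ren_conj, ren_disj, List.map_map, this]
  rfl

theorem ren_chi (e0 : M) (S : List (PF M)) (xs : List (List (List Bool))) :
    PF.mapOp e (chi e0 S xs) = chi (e e0) (S.map (PF.mapOp e)) xs := by
  simp only [chi, ren_disj, List.map_map]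
  congr 1
  exact List.map_congr_left fun i hi => ren_qs e e0 S i

theorem ren_AA (e0 : M) (S : List (PF M)) (os : List M) (xs : List (List (List Bool))) (n : ℕ) :
    PF.mapOp e (AA e0 S os xs n) = AA (e e0) (S.map (PF.mapOp e)) (os.map e) xs n := by
  induction n with
  | zero => rfl
  | succ n ih =>
    simp only [AA, PF.mapOp, ren_chi, ren_conj, List.map_map, ← ih]
    rfl

theorem ren_sub (φ : PF M) : sub (PF.mapOp e φ) = (sub φ).map (PF.mapOp e) := by
  induction φ <;> simp_all [sub, PF.mapOp]

theorem ren_ops (φ : PF M) : ops (PF.mapOp e φ) = (ops φ).map e := by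
  induction φ <;> simp_all [ops, PF.mapOp]

theorem ren_imp (φ ψ : PF M) : PF.mapOp e (PF.imp φ ψ) = PF.imp (PF.mapOp e φ) (PF.mapOp e ψ) := rfl

theorem ren_sur {M' : Type} {f : M → Option M'} {F : ℕ → Option ℕ} {g : M' → ℕ}
    (h : ∀ o, F (e o) = (f o).map g) (θ : PF M) :
    sur F (PF.encode id) (PF.mapOp e θ) = PF.mapOp g (sur f (PF.encode e) θ) := by
  induction θ with
  | atom n => rfl
  | neg a ih => simp only [PF.mapOp, sur, ih]
  | and a b iha ihb => simp only [PF.mapOp, sur, iha, ihb]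
  | box m a ih =>
    have hb : PF.encode id (PF.box (e m) (PF.mapOp e a)) = PF.encode e (PF.box m a) :=
      encode_mapOp e (PF.box m a)
    have := h m
    rcases hf : f m with _ | o
    · rw [hf] at this
      simp only [Option.map_none] at this
      simp only [PF.mapOp, sur, hf, this, hb]
    · rw [hf] at this
      simp only [Option.map_some] at this
      simp only [PF.mapOp, sur, hf, this, ih]

theorem range_mapOp (ξ : PF ℕ) : (∃ φ, PF.mapOp e φ = ξ) ↔ ∀ k ∈ ops ξ, ∃ o, e o = k := by
  constructor
  · rintro ⟨φ, rfl⟩ k hk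
    rw [ren_ops, List.mem_map] at hk
    obtain ⟨o, -, rfl⟩ := hk
    exact ⟨o, rfl⟩
  · intro h
    induction ξ with
    | atom n => exact ⟨.atom n, rfl⟩
    | neg a ih =>
      obtain ⟨φ, rfl⟩ := ih h
      exact ⟨.neg φ, rfl⟩
    | and a b iha ihb =>
      simp only [ops, List.mem_append] at h
      obtain ⟨φ, rfl⟩ := iha fun k hk => h k (Or.inl hk)
      obtain ⟨ψ, rfl⟩ := ihb fun k hk => h k (Or.inr hk)
      exact ⟨.and φ ψ, rfl⟩
    | box m a ih =>
      simp only [ops, List.mem_cons] at h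
      obtain ⟨φ, rfl⟩ := ih fun k hk => h k (Or.inr hk)
      obtain ⟨o, rfl⟩ := h m (Or.inl rfl)
      exact ⟨.box o φ, rfl⟩

def idf {M : Type} (j : M) : PF M := PF.imp (.box j (.atom 0)) (.box j (.atom 0))

theorem CS_idf {L : Set (PF M)} (hL : IsPLogic L) (j : ℕ) : CS e L (idf j) ↔ ∃ o, e o = j := by
  constructor
  · rintro ⟨φ, -, hφ⟩
    exact (range_mapOp e (idf j)).1 ⟨φ, hφ⟩ j (by simp [idf, PF.imp, ops])
  · rintro ⟨o, rfl⟩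
    exact ⟨idf o, hL.taut _ (taut_id _), rfl⟩

theorem CSG_idf {L : Set (PF M)} (hL : IsPLogic L) (j : ℕ) :
    CSG e L (top, idf j) ↔ ∃ o, e o = j := by
  constructor
  · rintro ⟨φ, ψ, -, -, hφ⟩
    exact (range_mapOp e (idf j)).1 ⟨ψ, hφ⟩ j (by simp [idf, PF.imp, ops])
  · rintro ⟨o, rfl⟩
    exact ⟨top, idf o, .ax (hL.taut _ (taut_id _)), rfl, rfl⟩

end ren

theorem p_idf : Primrec (idf : ℕ → PF ℕ) := by
  have : Primrec (fun j : ℕ => PF.box j (.atom 0)) := p_box.comp Primrec.id (Primrec.const _)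
  exact p_imp.comp this this

def F1 (k : ℕ) : Option ℕ := if k = 0 ∨ k % 2 = 1 then some ((k + 1) / 2) else none
def F2 (k : ℕ) : Option ℕ := if k % 2 = 0 then some (k / 2) else none

theorem p_mod2 (j : ℕ) : PrimrecPred (fun k : ℕ => k % 2 = j) :=
  Primrec.eq.comp (Primrec.nat_mod.comp Primrec.id (Primrec.const 2)) (Primrec.const j)

theorem p_h1 : Primrec (fun k : ℕ => (k + 1) / 2) :=
  Primrec.nat_div.comp Primrec.succ (Primrec.const 2)
theorem p_h2 : Primrec (fun k : ℕ => k / 2) :=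
  Primrec.nat_div.comp Primrec.id (Primrec.const 2)

theorem p_F1 : Primrec F1 :=
  Primrec.ite ((Primrec.eq.comp Primrec.id (Primrec.const 0)).or (p_mod2 1))
    (Primrec.option_some.comp p_h1) (Primrec.const none)

theorem p_F2 : Primrec F2 :=
  Primrec.ite (p_mod2 0) (Primrec.option_some.comp p_h2) (Primrec.const none)

section
variable {M1 M2 : Type} (e1 : M1 → ℕ) (e2 : M2 → ℕ)

theorem F1_eq (o : Option (M1 ⊕ M2)) : F1 (eOptSum e1 e2 o) = (f1 o).map (eOpt e1) := by
  rcases o with _ | m | m <;> simp [F1, f1, eOptSum, eOpt]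
  omega

theorem F2_eq (o : Option (M1 ⊕ M2)) : F2 (eOptSum e1 e2 o) = (f2 o).map (eOpt e2) := by
  rcases o with _ | m | m <;> simp [F2, f2, eOptSum, eOpt]

theorem odd_range {k : ℕ} (hk : k % 2 = 1) :
    (∃ o, eOptSum e1 e2 o = k) ↔ ∃ o, eOpt e1 o = (k + 1) / 2 := by
  constructor
  · rintro ⟨o, rfl⟩
    rcases o with _ | m | m <;> simp only [eOptSum] at hk ⊢
    · omega
    · exact ⟨some m, by simp only [eOpt]; omega⟩
    · omega
  · rintro ⟨o, ho⟩
    rcases o with _ | m <;> simp only [eOpt] at ho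
    · omega
    · exact ⟨some (.inl m), by simp only [eOptSum]; omega⟩

theorem even_range {k : ℕ} (hk : ¬ k % 2 = 1) :
    (∃ o, eOptSum e1 e2 o = k) ↔ ∃ o, eOpt e2 o = k / 2 := by
  constructor
  · rintro ⟨o, rfl⟩
    rcases o with _ | m | m <;> simp only [eOptSum] at hk ⊢
    · exact ⟨none, rfl⟩
    · omega
    · exact ⟨some m, by simp only [eOpt]; omega⟩
  · rintro ⟨o, ho⟩
    rcases o with _ | m <;> simp only [eOpt] at ho
    · exact ⟨none, by simp only [eOptSum]; omega⟩
    · exact ⟨some (.inr m), by simp only [eOptSum]; omega⟩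

end



abbrev XS := List (List (List Bool))

def wq (k : ℕ) : Bool × PF ℕ :=
  if k % 2 = 1 then (true, idf ((k + 1) / 2)) else (false, idf (k / 2))

def wqG (k : ℕ) : Bool × (PF ℕ × PF ℕ) :=
  if k % 2 = 1 then (true, (top, idf ((k + 1) / 2))) else (false, (top, idf (k / 2)))

theorem p_wq : Primrec wq :=
  Primrec.ite (p_mod2 1) ((Primrec.const true).pair (p_idf.comp p_h1))
    ((Primrec.const false).pair (p_idf.comp p_h2))

theorem p_wqG : Primrec wqG :=
  Primrec.ite (p_mod2 1) ((Primrec.const true).pair ((Primrec.const top).pair (p_idf.comp p_h1)))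
    ((Primrec.const false).pair ((Primrec.const top).pair (p_idf.comp p_h2)))

def qf (ξ : PF ℕ) (xs : XS) (n : ℕ) (x : List (List Bool)) : PF ℕ :=
  PF.imp (AA 0 (sub ξ) (ops ξ) xs (n + 1)) (PF.neg (qs 0 (sub ξ) x))

def qmain (ξ : PF ℕ) (xs : XS) : PF ℕ :=
  PF.imp (AA 0 (sub ξ) (ops ξ) xs (sub ξ).length) ξ

def queries (ξ : PF ℕ) (xs : XS) : List (Bool × PF ℕ) :=
  (true, sur F1 (PF.encode id) (qmain ξ xs)) ::
    (List.range (sub ξ).length).flatMap fun n => xs.flatMap fun x =>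
      [(true, sur F1 (PF.encode id) (qf ξ xs n x)), (false, sur F2 (PF.encode id) (qf ξ xs n x))]

def queriesG (p : PF ℕ × PF ℕ) (xs : XS) : List (Bool × (PF ℕ × PF ℕ)) :=
  (true, (sur F1 (PF.encode id) (PiG 0 p.1 p.2 xs), sur F1 (PF.encode id) p.2)) ::
    xs.flatMap fun x =>
      [(true, (sur F1 (PF.encode id) (PiG 0 p.1 p.2 xs),
          sur F1 (PF.encode id) (PF.neg (qs 0 (sub p.1 ++ sub p.2) x)))),
       (false, (sur F2 (PF.encode id) (PiG 0 p.1 p.2 xs),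
          sur F2 (PF.encode id) (PF.neg (qs 0 (sub p.1 ++ sub p.2) x))))]

theorem p_pairL {α β : Type} [Primcodable α] [Primcodable β] {a b : α → β} (ha : Primrec a)
    (hb : Primrec b) : Primrec (fun z => [a z, b z]) :=
  Primrec.list_cons.comp ha (Primrec.list_cons.comp hb (Primrec.const []))

theorem p_queries : Primrec₂ queries := by
  have hS : Primrec (fun z : (PF ℕ × XS) => sub z.1) := p_sub.comp Primrec.fst
  have hO : Primrec (fun z : (PF ℕ × XS) => ops z.1) := p_ops.comp Primrec.fst
  have hN : Primrec (fun z : (PF ℕ × XS) => (sub z.1).length) := Primrec.list_length.comp hS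
  have hX : Primrec (fun z : (PF ℕ × XS) => z.2) := Primrec.snd
  have hD : Primrec (fun z : (PF ℕ × XS) => (sub z.1, ops z.1, z.2)) := hS.pair (hO.pair hX)
  have hm : Primrec (fun z : (PF ℕ × XS) => qmain z.1 z.2) :=
    p_imp.comp (p_AA.comp (hD.pair hN)) Primrec.fst
  have hq : Primrec (fun z : ((PF ℕ × XS) × ℕ) × List (List Bool) => qf z.1.1.1 z.1.1.2 z.1.2 z.2) :=
    p_imp.comp (p_AA.comp ((hD.comp (Primrec.fst.comp Primrec.fst)).pair
      (Primrec.succ.comp (Primrec.snd.comp Primrec.fst))))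
      (p_neg.comp (p_qs.comp (hS.comp (Primrec.fst.comp Primrec.fst)) Primrec.snd))
  have hl : Primrec₂ (fun (y : (PF ℕ × XS) × ℕ) (x : List (List Bool)) =>
      [(true, sur F1 (PF.encode id) (qf y.1.1 y.1.2 y.2 x)),
        (false, sur F2 (PF.encode id) (qf y.1.1 y.1.2 y.2 x))]) :=
    p_pairL ((Primrec.const true).pair ((p_sur p_F1).comp hq))
      ((Primrec.const false).pair ((p_sur p_F2).comp hq))
  have hX' : Primrec (fun y : (PF ℕ × XS) × ℕ => y.1.2) := hX.comp Primrec.fst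
  have h2 : Primrec₂ (fun (z : PF ℕ × XS) (n : ℕ) => z.2.flatMap fun x =>
      [(true, sur F1 (PF.encode id) (qf z.1 z.2 n x)),
        (false, sur F2 (PF.encode id) (qf z.1 z.2 n x))]) :=
    Primrec.list_flatMap hX' hl
  exact Primrec.list_cons.comp ((Primrec.const true).pair ((p_sur p_F1).comp hm))
    (Primrec.list_flatMap (Primrec.list_range.comp hN) h2)

theorem p_queriesG : Primrec₂ queriesG := by
  have hX : Primrec (fun z : ((PF ℕ × PF ℕ) × XS) => z.2) := Primrec.snd
  have hP : Primrec (fun z : ((PF ℕ × PF ℕ) × XS) => PiG 0 z.1.1 z.1.2 z.2) := p_PiG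
  have hS : Primrec (fun z : ((PF ℕ × PF ℕ) × XS) => sub z.1.1 ++ sub z.1.2) :=
    Primrec.list_append.comp
      (p_sub.comp (Primrec.fst.comp Primrec.fst)) (p_sub.comp (Primrec.snd.comp Primrec.fst))
  have hq : Primrec (fun y : ((PF ℕ × PF ℕ) × XS) × List (List Bool) =>
      PF.neg (qs 0 (sub y.1.1.1 ++ sub y.1.1.2) y.2)) :=
    p_neg.comp (p_qs.comp (hS.comp Primrec.fst) Primrec.snd)
  have hP' := hP.comp (Primrec.fst (α := (PF ℕ × PF ℕ) × XS) (β := List (List Bool)))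
  have hl : Primrec₂ (fun (z : (PF ℕ × PF ℕ) × XS) (x : List (List Bool)) =>
      [(true, (sur F1 (PF.encode id) (PiG 0 z.1.1 z.1.2 z.2),
          sur F1 (PF.encode id) (PF.neg (qs 0 (sub z.1.1 ++ sub z.1.2) x)))),
       (false, (sur F2 (PF.encode id) (PiG 0 z.1.1 z.1.2 z.2),
          sur F2 (PF.encode id) (PF.neg (qs 0 (sub z.1.1 ++ sub z.1.2) x))))]) :=
    p_pairL ((Primrec.const true).pair (((p_sur p_F1).comp hP').pair ((p_sur p_F1).comp hq)))
      ((Primrec.const false).pair (((p_sur p_F2).comp hP').pair ((p_sur p_F2).comp hq)))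
  exact Primrec.list_cons.comp ((Primrec.const true).pair (((p_sur p_F1).comp hP).pair
    ((p_sur p_F1).comp (Primrec.snd.comp Primrec.fst)))) (Primrec.list_flatMap hX hl)

theorem p_slsl : Primrec (fun n : ℕ => sl (sl (allB n))) := p_sl.comp (p_sl.comp p_allB)

section
variable {M1 M2 : Type} {d : DSem} {L1 : Set (PF M1)} {L2 : Set (PF M2)}
  {e1 : M1 → ℕ} {e2 : M2 → ℕ}

theorem bwd (he1 : Function.Injective e1) (he2 : Function.Injective e2)
    (hc1 : PF.bot ∉ LS5 d L1) (hc2 : PF.bot ∉ LS5 d L2)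
    (hK1 : KComplete (LS5 d L1)) (hK2 : KComplete (LS5 d L2))
    (hD1 : DecidableP (eOpt e1) (LS5 d L1)) (hD2 : DecidableP (eOpt e2) (LS5 d L2)) :
    DecidableP (eOptSum e1 e2) (fusionE (LS5 d L1) (LS5 d L2)) := by
  rw [dec_CS] at hD1 hD2 ⊢
  have hS := eOptSum_inj he1 he2
  have hc : Function.Injective (PF.encode (eOptSum e1 e2)) := encode_inj hS
  have h1 := fun o => F1_eq e1 e2 o
  have h2 := fun o => F2_eq e1 e2 o
  refine tt_red (compPred_cond hD1 hD2) (wf := fun ξ => (ops ξ).map wq)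
    (Q := fun ξ => (sl (sl (allB (sub ξ).length))).map (queries ξ)) ?_ ?_ ?_
  · exact Primrec.list_map p_ops (p_wq.comp Primrec.snd)
  · exact Primrec.list_map (p_slsl.comp (Primrec.list_length.comp p_sub)) p_queries
  · intro ξ
    have hwf : (∀ q ∈ (ops ξ).map wq, bif q.1 then CS (eOpt e1) (LS5 d L1) q.2
        else CS (eOpt e2) (LS5 d L2) q.2) ↔ ∃ φ, PF.mapOp (eOptSum e1 e2) φ = ξ := by
      rw [range_mapOp]
      simp only [List.mem_map, forall_exists_index, and_imp, forall_apply_eq_imp_iff₂]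
      refine forall_congr' fun k => forall_congr' fun _ => ?_
      by_cases hk : k % 2 = 1
      · simp only [wq, if_pos hk, cond_true]
        rw [CS_idf _ (isPLogic_LS5 d L1), odd_range _ _ hk]
      · simp only [wq, if_neg hk, cond_false]
        rw [CS_idf _ (isPLogic_LS5 d L2), even_range _ _ hk]
    have key : ∀ φ, CS (eOptSum e1 e2) (fusionE (LS5 d L1) (LS5 d L2))
        (PF.mapOp (eOptSum e1 e2) φ) ↔
        ¬ ∃ ql ∈ (sl (sl (allB (sub (PF.mapOp (eOptSum e1 e2) φ)).length))).map
          (queries (PF.mapOp (eOptSum e1 e2) φ)), ∀ q ∈ ql, ¬ (bif q.1 then CS (eOpt e1) (LS5 d L1) q.2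
        else CS (eOpt e2) (LS5 d L2) q.2) := by
      intro φ
      have g1 : ∀ θ, CS (eOpt e1) (LS5 d L1) (sur F1 (PF.encode id) (PF.mapOp (eOptSum e1 e2) θ)) ↔
          sur f1 (PF.encode (eOptSum e1 e2)) θ ∈ LS5 d L1 := fun θ => by
        rw [ren_sur _ h1, CS_map (eOpt_inj he1)]
      have g2 : ∀ θ, CS (eOpt e2) (LS5 d L2) (sur F2 (PF.encode id) (PF.mapOp (eOptSum e1 e2) θ)) ↔
          sur f2 (PF.encode (eOptSum e1 e2)) θ ∈ LS5 d L2 := fun θ => by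
        rw [ren_sur _ h2, CS_map (eOpt_inj he2)]
      have hm : ∀ xs, qmain (PF.mapOp (eOptSum e1 e2) φ) xs = PF.mapOp (eOptSum e1 e2)
          (PF.imp (AA none (sub φ) (ops φ) xs (sub φ).length) φ) := fun xs => by
        rw [ren_imp, ren_AA, qmain, ren_sub, ren_ops, List.length_map]; rfl
      have hq : ∀ xs n x, qf (PF.mapOp (eOptSum e1 e2) φ) xs n x = PF.mapOp (eOptSum e1 e2)
          (PF.imp (AA none (sub φ) (ops φ) xs (n + 1)) (PF.neg (qs none (sub φ) x))) :=
        fun xs n x => by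
        rw [ren_imp, ren_AA, PF.mapOp, ren_qs, qf, ren_sub, ren_ops]; rfl
      rw [CS_map hS, ← not_iff_not, not_not, certL_iff hc1 hc2 hK1 hK2 hc]
      simp only [List.mem_map, exists_exists_and_eq_and, ren_sub, List.length_map]
      refine exists_congr fun xs => and_congr_right fun _ => ?_
      simp only [queries, hm, hq, certL, List.mem_cons, List.mem_flatMap, List.mem_range, ren_sub,
        List.length_map]
      constructor
      · rintro ⟨ha, hb⟩ q (rfl | ⟨n, hn, x, hx, rfl | rfl | h⟩)
        · simp only [cond_true, g1]; exact hb
        · simp only [cond_true, g1]; exact (ha n hn x hx).1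
        · simp only [cond_false, g2]; exact (ha n hn x hx).2
        · cases h
      · intro h
        refine ⟨fun n hn x hx => ⟨?_, ?_⟩, ?_⟩
        · have := h _ (Or.inr ⟨n, hn, x, hx, Or.inl rfl⟩)
          simpa only [cond_true, g1] using this
        · have := h _ (Or.inr ⟨n, hn, x, hx, Or.inr (Or.inl rfl)⟩)
          simpa only [cond_false, g2] using this
        · have := h _ (Or.inl rfl)
          simpa only [cond_true, g1] using this
    rw [hwf]
    constructor
    · intro h
      obtain ⟨φ, hφ, rfl⟩ := id h
      exact ⟨⟨φ, rfl⟩, (key φ).1 h⟩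
    · rintro ⟨⟨φ, rfl⟩, h⟩
      exact (key φ).2 h

theorem bwdG (he1 : Function.Injective e1) (he2 : Function.Injective e2)
    (hK1 : GloballyKComplete (LS5 d L1)) (hK2 : GloballyKComplete (LS5 d L2))
    (hD1 : GloballyDecidableP (eOpt e1) (LS5 d L1))
    (hD2 : GloballyDecidableP (eOpt e2) (LS5 d L2)) :
    GloballyDecidableP (eOptSum e1 e2) (fusionE (LS5 d L1) (LS5 d L2)) := by
  rw [dec_CSG] at hD1 hD2 ⊢
  have hS := eOptSum_inj he1 he2
  have hc : Function.Injective (PF.encode (eOptSum e1 e2)) := encode_inj hS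
  have h1 := fun o => F1_eq e1 e2 o
  have h2 := fun o => F2_eq e1 e2 o
  refine tt_red (compPred_cond hD1 hD2) (wf := fun p => (ops p.1 ++ ops p.2).map wqG)
    (Q := fun p => (sl (sl (allB (sub p.1 ++ sub p.2).length))).map (queriesG p)) ?_ ?_ ?_
  · exact Primrec.list_map (Primrec.list_append.comp (p_ops.comp Primrec.fst)
      (p_ops.comp Primrec.snd)) (p_wqG.comp Primrec.snd)
  · exact Primrec.list_map (p_slsl.comp (Primrec.list_length.comp (Primrec.list_append.comp
      (p_sub.comp Primrec.fst) (p_sub.comp Primrec.snd)))) p_queriesG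
  · rintro ⟨ξ, η⟩
    dsimp only
    have hwf : (∀ q ∈ (ops ξ ++ ops η).map wqG, bif q.1 then CSG (eOpt e1) (LS5 d L1) q.2
        else CSG (eOpt e2) (LS5 d L2) q.2) ↔ (∃ φ, PF.mapOp (eOptSum e1 e2) φ = ξ) ∧
          ∃ ψ, PF.mapOp (eOptSum e1 e2) ψ = η := by
      rw [range_mapOp, range_mapOp]
      simp only [List.mem_map, forall_exists_index, and_imp, forall_apply_eq_imp_iff₂]
      rw [← List.forall_mem_append]
      refine forall_congr' fun k => forall_congr' fun _ => ?_
      by_cases hk : k % 2 = 1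
      · simp only [wqG, if_pos hk, cond_true]
        rw [CSG_idf _ (isPLogic_LS5 d L1), odd_range _ _ hk]
      · simp only [wqG, if_neg hk, cond_false]
        rw [CSG_idf _ (isPLogic_LS5 d L2), even_range _ _ hk]
    have key : ∀ φ ψ, CSG (eOptSum e1 e2) (fusionE (LS5 d L1) (LS5 d L2))
        (PF.mapOp (eOptSum e1 e2) φ, PF.mapOp (eOptSum e1 e2) ψ) ↔
        ¬ ∃ ql ∈ (sl (sl (allB (sub (PF.mapOp (eOptSum e1 e2) φ) ++
            sub (PF.mapOp (eOptSum e1 e2) ψ)).length))).map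
          (queriesG (PF.mapOp (eOptSum e1 e2) φ, PF.mapOp (eOptSum e1 e2) ψ)),
          ∀ q ∈ ql, ¬ (bif q.1 then CSG (eOpt e1) (LS5 d L1) q.2
            else CSG (eOpt e2) (LS5 d L2) q.2) := by
      intro φ ψ
      have g1 : ∀ θ θ', CSG (eOpt e1) (LS5 d L1)
          (sur F1 (PF.encode id) (PF.mapOp (eOptSum e1 e2) θ),
            sur F1 (PF.encode id) (PF.mapOp (eOptSum e1 e2) θ')) ↔
          PGlobal (LS5 d L1) (sur f1 (PF.encode (eOptSum e1 e2)) θ)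
            (sur f1 (PF.encode (eOptSum e1 e2)) θ') := fun θ θ' => by
        rw [ren_sur _ h1, ren_sur _ h1, CSG_map (eOpt_inj he1)]
      have g2 : ∀ θ θ', CSG (eOpt e2) (LS5 d L2)
          (sur F2 (PF.encode id) (PF.mapOp (eOptSum e1 e2) θ),
            sur F2 (PF.encode id) (PF.mapOp (eOptSum e1 e2) θ')) ↔
          PGlobal (LS5 d L2) (sur f2 (PF.encode (eOptSum e1 e2)) θ)
            (sur f2 (PF.encode (eOptSum e1 e2)) θ') := fun θ θ' => by
        rw [ren_sur _ h2, ren_sur _ h2, CSG_map (eOpt_inj he2)]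
      have hm : ∀ xs, PiG 0 (PF.mapOp (eOptSum e1 e2) φ) (PF.mapOp (eOptSum e1 e2) ψ) xs =
          PF.mapOp (eOptSum e1 e2) (PiG none φ ψ xs) := fun xs => by
        rw [PiG, PiG, PF.mapOp, ren_chi, List.map_append, ren_sub, ren_sub]; rfl
      have hq : ∀ x, PF.neg (qs 0 ((sub φ).map (PF.mapOp (eOptSum e1 e2)) ++
          (sub ψ).map (PF.mapOp (eOptSum e1 e2))) x) = PF.mapOp (eOptSum e1 e2)
          (PF.neg (qs none (sub φ ++ sub ψ) x)) := fun x => by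
        rw [PF.mapOp, ren_qs, List.map_append]; rfl
      rw [CSG_map hS, ← not_iff_not, not_not, certG_iff hK1 hK2 hc]
      simp only [List.mem_map, exists_exists_and_eq_and, ren_sub, List.length_map,
        List.length_append]
      refine exists_congr fun xs => and_congr_right fun _ => ?_
      simp only [queriesG, hm, ren_sub, hq, certG, List.mem_cons, List.mem_flatMap]
      constructor
      · rintro ⟨ha, hb⟩ q (rfl | ⟨x, hx, rfl | rfl | h⟩)
        · simp only [cond_true, g1]; exact hb
        · simp only [cond_true, g1]; exact (ha x hx).1
        · simp only [cond_false, g2]; exact (ha x hx).2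
        · cases h
      · intro h
        refine ⟨fun x hx => ⟨?_, ?_⟩, ?_⟩
        · have := h _ (Or.inr ⟨x, hx, Or.inl rfl⟩)
          simpa only [cond_true, g1] using this
        · have := h _ (Or.inr ⟨x, hx, Or.inr (Or.inl rfl)⟩)
          simpa only [cond_false, g2] using this
        · have := h _ (Or.inl rfl)
          simpa only [cond_true, g1] using this
    rw [hwf]
    constructor
    · intro h
      obtain ⟨φ, ψ, hφ, h1, h2⟩ := id h
      dsimp only at h1 h2
      subst h1 h2
      exact ⟨⟨⟨φ, rfl⟩, ⟨ψ, rfl⟩⟩, (key φ ψ).1 h⟩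
    · rintro ⟨⟨⟨φ, rfl⟩, ⟨ψ, rfl⟩⟩, h⟩
      exact (key φ ψ).2 h

end

/-- Transfer for (semi)commutators with S5: if `[Lᵢ, S5]^d`
is (globally) Kripke complete for `i = 1,2`, then
`[L1, S5]^d ⊗_E [L2, S5]^d` is (globally) Kripke complete, and it is
(globally) decidable iff both `[Lᵢ, S5]^d` are. -/
theorem commutator_fusion_transfer {M1 M2 : Type} (d : DSem)
    (e1 : M1 → ℕ) (e2 : M2 → ℕ)
    (he1 : Function.Injective e1) (he2 : Function.Injective e2)
    (L1 : Set (PF M1)) (L2 : Set (PF M2))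
    (h1 : IsPLogic L1) (h2 : IsPLogic L2)
    (hcon1 : PF.bot ∉ L1) (hcon2 : PF.bot ∉ L2) :
    (KComplete (LS5 d L1) → KComplete (LS5 d L2) →
      (KComplete (fusionE (LS5 d L1) (LS5 d L2)) ∧
       (DecidableP (eOptSum e1 e2) (fusionE (LS5 d L1) (LS5 d L2)) ↔
         (DecidableP (eOpt e1) (LS5 d L1) ∧ DecidableP (eOpt e2) (LS5 d L2))))) ∧
    (GloballyKComplete (LS5 d L1) → GloballyKComplete (LS5 d L2) →
      (GloballyKComplete (fusionE (LS5 d L1) (LS5 d L2)) ∧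
       (GloballyDecidableP (eOptSum e1 e2) (fusionE (LS5 d L1) (LS5 d L2)) ↔
         (GloballyDecidableP (eOpt e1) (LS5 d L1) ∧
          GloballyDecidableP (eOpt e2) (LS5 d L2))))) := by
  have hc1 := LS5_con d h1 hcon1
  have hc2 := LS5_con d h2 hcon2
  have hc : Function.Injective (PF.encode (eOptSum e1 e2)) := encode_inj (eOptSum_inj he1 he2)
  refine ⟨fun hK1 hK2 => ⟨fusion_K hc1 hc2 hK1 hK2 hc, fun h => ⟨?_, ?_⟩, fun h => ?_⟩,
    fun hK1 hK2 => ⟨fusion_GK hK1 hK2 hc, fun h => ⟨?_, ?_⟩, fun h => ?_⟩⟩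
  · exact fwd_gen t1_back t1_fw t1_prim (cons1 hc2 hK1 hK2) h
  · exact fwd_gen t2_back t2_fw t2_prim (cons2 hc1 hK1 hK2) h
  · exact bwd he1 he2 hc1 hc2 hK1 hK2 h.1 h.2
  · exact fwd_genG t1_back t1_fw t1_prim (consG1 hc2 hK1 hK2) h
  · exact fwd_genG t2_back t2_fw t2_prim (consG2 hc1 hK1 hK2) h
  · exact bwdG he1 he2 hK1 hK2 h.1 h.2

end PropML
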